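/- arXiv:1708.06054 — 3 statements merged into one kernel-verified Lean document; each statement's English description precedes it below -/
import Mathlib

section
/- The automorphism group of the binary code H ⊂ F₂^{P²(F₄)} generated by the F₄-lines of P² is exactly the group PΓL(3,4) of order 120960 acting on the 21 points of P²(F₄). -/
open scoped Classical

/-- The field `F₄`. -/
abbrev F4 : Type := GaloisField 2 2

/-- Points of `P²(F₄)` as 1-dimensional subspaces of `F₄³`. -/
def ProjPt : Type := {p : Submodule F4 (Fin 3 → F4) // Module.finrank F4 p = 1}

/-- `F₄`-rational lines of `P²` as 2-dimensional subspaces of `F₄³`. -/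
def ProjLine : Type := {l : Submodule F4 (Fin 3 → F4) // Module.finrank F4 l = 2}

/-- Characteristic vector of a line. -/
noncomputable def lineWord (l : ProjLine) : ProjPt → ZMod 2 :=
  fun p => if p.val ≤ l.val then 1 else 0

/-- The code `H` spanned by the line words. -/
noncomputable def Hcode : Submodule (ZMod 2) (ProjPt → ZMod 2) :=
  Submodule.span (ZMod 2) (Set.range lineWord)

/-- The automorphism group of `H`: permutations of `P²(F₄)` preserving `H`. -/
def AutH : Set (Equiv.Perm ProjPt) :=
  {σ | ∀ w : ProjPt → ZMod 2, (fun p => w (σ p)) ∈ Hcode ↔ w ∈ Hcode}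

/-- The permutations of `P²(F₄)` induced by `ΓL(3,4)`: invertible semilinear
transformations of `F₄³` (over an arbitrary field automorphism `φ` of `F₄`,
i.e. the identity or the Frobenius). -/
def PGammaL : Set (Equiv.Perm ProjPt) :=
  {σ | ∃ (φ : F4 ≃+* F4) (g : (Fin 3 → F4) ≃ (Fin 3 → F4)),
    (∀ x y, g (x + y) = g x + g y) ∧
    (∀ (c : F4) (x), g (c • x) = φ c • g x) ∧
    (∀ p : ProjPt, ((σ p).val : Set (Fin 3 → F4)) = g '' (p.val : Set (Fin 3 → F4)))}


abbrev V3 : Type := Fin 3 → F4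

noncomputable instance : Fintype F4 := Fintype.ofFinite _

theorem card_F4 : Nat.card F4 = 4 := by
  rw [GaloisField.card 2 2 (by norm_num)]; norm_num

instance : Finite ProjPt := by unfold ProjPt; infer_instance
noncomputable instance : Fintype ProjPt := Fintype.ofFinite _

theorem ProjPt.ext {p q : ProjPt} (h : p.val = q.val) : p = q := Subtype.ext h
theorem ProjLine.ext {p q : ProjLine} (h : p.val = q.val) : p = q := Subtype.ext h

/-- The point spanned by a nonzero vector. -/
noncomputable def mkPt (v : V3) (hv : v ≠ 0) : ProjPt :=
  ⟨Submodule.span F4 {v}, finrank_span_singleton hv⟩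

theorem mem_mkPt (v : V3) (hv : v ≠ 0) : v ∈ (mkPt v hv).val :=
  Submodule.mem_span_singleton_self v

theorem exists_vec (p : ProjPt) : ∃ v ∈ p.val, v ≠ 0 := by
  have h := p.2
  have : p.val ≠ ⊥ := by
    intro h0
    rw [h0, finrank_bot] at h
    omega
  obtain ⟨v, hv, h0⟩ := Submodule.exists_mem_ne_zero_of_ne_bot this
  exact ⟨v, hv, h0⟩

theorem eq_span_of_mem (p : ProjPt) {v : V3} (hv : v ∈ p.val) (h0 : v ≠ 0) :
    p.val = Submodule.span F4 {v} := by
  symm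
  apply Submodule.eq_of_le_of_finrank_eq
  · simpa using hv
  · rw [finrank_span_singleton h0, p.2]

theorem pt_le_iff (p : ProjPt) {v : V3} (hv : v ∈ p.val) (h0 : v ≠ 0) (l : Submodule F4 V3) :
    p.val ≤ l ↔ v ∈ l := by
  rw [eq_span_of_mem p hv h0]; simp

theorem pt_eq_of_mem {p q : ProjPt} {v : V3} (hp : v ∈ p.val) (hq : v ∈ q.val) (h0 : v ≠ 0) :
    p = q := by
  apply ProjPt.ext
  rw [eq_span_of_mem p hp h0, eq_span_of_mem q hq h0]

theorem pt_le_pt {p q : ProjPt} (h : p.val ≤ q.val) : p = q :=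
  ProjPt.ext (Submodule.eq_of_le_of_finrank_eq h (by rw [p.2, q.2]))

theorem inf_pt {p q : ProjPt} (h : p ≠ q) : p.val ⊓ q.val = ⊥ := by
  rw [eq_bot_iff]
  intro v hv
  by_contra h0
  exact h (pt_eq_of_mem hv.1 hv.2 (by simpa using h0))

/-- Line through two points. -/
noncomputable def joinL (p q : ProjPt) (h : p ≠ q) : ProjLine :=
  ⟨p.val ⊔ q.val, by
    have := Submodule.finrank_sup_add_finrank_inf_eq p.val q.val
    rw [inf_pt h, finrank_bot, p.2, q.2] at this
    omega⟩

theorem left_le_joinL (p q : ProjPt) (h : p ≠ q) : p.val ≤ (joinL p q h).val := le_sup_left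
theorem right_le_joinL (p q : ProjPt) (h : p ≠ q) : q.val ≤ (joinL p q h).val := le_sup_right

theorem joinL_unique {p q : ProjPt} (h : p ≠ q) {l : ProjLine} (hp : p.val ≤ l.val)
    (hq : q.val ≤ l.val) : l = joinL p q h := by
  apply ProjLine.ext
  symm
  apply Submodule.eq_of_le_of_finrank_eq
  · exact sup_le hp hq
  · rw [(joinL p q h).2, l.2]

theorem line_unique {p q : ProjPt} (h : p ≠ q) {l m : ProjLine} (hp : p.val ≤ l.val)
    (hq : q.val ≤ l.val) (hp' : p.val ≤ m.val) (hq' : q.val ≤ m.val) : l = m := by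
  rw [joinL_unique h hp hq, joinL_unique h hp' hq']

theorem exists_meet (l m : ProjLine) : ∃ p : ProjPt, p.val ≤ l.val ∧ p.val ≤ m.val := by
  have h := Submodule.finrank_sup_add_finrank_inf_eq l.val m.val
  have h3 : Module.finrank F4 ↥(l.val ⊔ m.val) ≤ 3 := by
    have := Submodule.finrank_le (l.val ⊔ m.val)
    simpa using this
  rw [l.2, m.2] at h
  have : l.val ⊓ m.val ≠ ⊥ := by
    intro h0
    rw [h0, finrank_bot] at h
    omega
  obtain ⟨v, hv, h0⟩ := Submodule.exists_mem_ne_zero_of_ne_bot this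
  refine ⟨mkPt v h0, ?_, ?_⟩
  · rw [pt_le_iff _ (mem_mkPt v h0) h0]; exact hv.1
  · rw [pt_le_iff _ (mem_mkPt v h0) h0]; exact hv.2

/-- points on a line -/
noncomputable def ptsOn (l : ProjLine) : Finset ProjPt :=
  Finset.univ.filter (fun p => p.val ≤ l.val)

theorem mem_ptsOn (l : ProjLine) (p : ProjPt) : p ∈ ptsOn l ↔ p.val ≤ l.val := by
  simp [ptsOn]

theorem card_ptsOn (l : ProjLine) : (ptsOn l).card = 5 := by
  have h1 : Nat.card (Projectivization F4 l.val) = 5 := by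
    rw [Projectivization.card_of_finrank_two F4 l.val l.2, card_F4]
  have e : {p : ProjPt // p.val ≤ l.val} ≃ {H : Submodule F4 l.val // Module.finrank F4 H = 1} :=
    { toFun := fun p => ⟨(Submodule.comap l.val.subtype p.1.val), by
        rw [LinearEquiv.finrank_eq (Submodule.comapSubtypeEquivOfLe p.2)]; exact p.1.2⟩
      invFun := fun H => ⟨⟨Submodule.map l.val.subtype H.1, by
        exact (LinearEquiv.finrank_eq
          (Submodule.equivMapOfInjective _ (Submodule.injective_subtype _) _)).symm.trans H.2⟩,
        Submodule.map_subtype_le _ _⟩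
      left_inv := by
        intro p
        apply Subtype.ext
        apply ProjPt.ext
        simp [Submodule.map_comap_subtype, p.2]
      right_inv := by
        intro H
        apply Subtype.ext
        simp [Submodule.comap_map_eq_of_injective (Submodule.injective_subtype _)] }
  have h2 : Nat.card {p : ProjPt // p.val ≤ l.val} = 5 := by
    rw [← h1]
    exact Nat.card_congr (e.trans (Projectivization.equivSubmodule F4 l.val).symm)
  rw [← h2, Nat.card_eq_fintype_card, Fintype.card_subtype, ptsOn]

theorem exists_off (l : ProjLine) : ∃ p : ProjPt, ¬ p.val ≤ l.val := by
  have : l.val ≠ ⊤ := by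
    intro h
    have h2 := l.2
    rw [h, finrank_top] at h2
    simp at h2
  obtain ⟨v, hv⟩ : ∃ v, v ∉ l.val := by
    by_contra! h
    exact this (by ext; simp [h])
  have h0 : v ≠ 0 := by rintro rfl; exact hv (zero_mem _)
  exact ⟨mkPt v h0, fun h => hv ((pt_le_iff _ (mem_mkPt v h0) h0 _).1 h)⟩

/-- A blocking set of size 5 is a line. -/
theorem blocking (S : Finset ProjPt) (hS : S.card = 5)
    (hb : ∀ m : ProjLine, ∃ p ∈ S, p.val ≤ m.val) : ∃ l, S = ptsOn l := by
  obtain ⟨p, hp, q, hq, hpq⟩ := Finset.one_lt_card.1 (by omega : 1 < S.card)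
  refine ⟨joinL p q hpq, ?_⟩
  set l := joinL p q hpq with hl
  have hpl : p.val ≤ l.val := left_le_joinL _ _ _
  have hql : q.val ≤ l.val := right_le_joinL _ _ _
  symm
  apply Finset.eq_of_subset_of_card_le _ (by rw [hS, card_ptsOn])
  intro r hr
  rw [mem_ptsOn] at hr
  by_contra hrS
  have hrp : r ≠ p := by rintro rfl; exact hrS hp
  have hrq : r ≠ q := by rintro rfl; exact hrS hq
  obtain ⟨s, hs⟩ := exists_off l
  have hps : p ≠ s := by rintro rfl; exact hs hpl
  set m := joinL p s hps with hm
  have hpm : p.val ≤ m.val := left_le_joinL _ _ _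
  have hsm : s.val ≤ m.val := right_le_joinL _ _ _
  have hlm : l ≠ m := by rintro h; rw [h] at hs; exact hs hsm
  have hrm : ¬ r.val ≤ m.val := fun h => hlm (line_unique hrp hr hpl h hpm)
  have H : ∀ x : ProjPt, ∃ y : ProjPt, x ∈ ptsOn m →
      y ∈ S ∧ ∃ k : ProjLine, r.val ≤ k.val ∧ x.val ≤ k.val ∧ y.val ≤ k.val := by
    intro x
    by_cases hx : x ∈ ptsOn m
    · have hrx : r ≠ x := by rintro rfl; exact hrm ((mem_ptsOn _ _).1 hx)
      obtain ⟨y, hy, hyk⟩ := hb (joinL r x hrx)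
      exact ⟨y, fun _ => ⟨hy, _, left_le_joinL _ _ _, right_le_joinL _ _ _, hyk⟩⟩
    · exact ⟨x, fun h => absurd h hx⟩
  choose f hf using H
  have hmaps : ∀ x ∈ ptsOn m, f x ∈ S := fun x hx => (hf x hx).1
  have hinj : Set.InjOn f (ptsOn m) := by
    intro x hx y hy hxy
    obtain ⟨hxS, k, hrk, hxk, hfk⟩ := hf x hx
    obtain ⟨hyS, k', hrk', hyk, hfk'⟩ := hf y hy
    rw [← hxy] at hfk'
    have hrf : r ≠ f x := by intro h; rw [h] at hrS; exact hrS hxS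
    have hkk : k = k' := line_unique hrf hrk hfk hrk' hfk'
    subst hkk
    by_contra hne
    have : k = m := line_unique hne hxk hyk ((mem_ptsOn _ _).1 hx) ((mem_ptsOn _ _).1 hy)
    rw [this] at hrk
    exact hrm hrk
  have hsurj := Finset.surj_on_of_inj_on_of_card_le (fun x _ => f x) hmaps
    (fun x y hx hy h => hinj hx hy h) (by rw [hS, card_ptsOn])
  have key : ∀ t ∈ S, t.val ≤ l.val → t = f p := by
    intro t ht htl
    obtain ⟨x, hx, hxt⟩ := hsurj t ht
    obtain ⟨hxS, k, hrk, hxk, hfk⟩ := hf x hx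
    have hrt : r ≠ t := by rintro rfl; exact hrS ht
    rw [← hxt] at hfk
    have hkl : k = l := line_unique hrt hrk hfk hr htl
    subst hkl
    have : x = p := by
      by_contra hne
      exact hlm (line_unique hne hxk hpl ((mem_ptsOn _ _).1 hx) hpm)
    rw [← this, hxt]
  exact hpq ((key p hp hpl).trans (key q hq hql).symm)

/-- A permutation whose inverse maps lines to lines. -/
def LineMap (σ : Equiv.Perm ProjPt) : Prop :=
  ∀ l : ProjLine, ∃ l' : ProjLine, ∀ p : ProjPt, p.val ≤ l'.val ↔ (σ p).val ≤ l.val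

theorem sum_lineWord (l : ProjLine) : ∑ p, lineWord l p = 1 := by
  have h := card_ptsOn l
  have : ∑ p, lineWord l p = ((ptsOn l).card : ZMod 2) := by
    simp [lineWord, ptsOn]
  rw [this, h]; decide

theorem sum_lineWord_mul (l m : ProjLine) : ∑ p, lineWord l p * lineWord m p = 1 := by
  by_cases h : l = m
  · subst h
    rw [← sum_lineWord l]
    apply Finset.sum_congr rfl
    intro p _
    simp only [lineWord]
    split_ifs <;> simp
  · obtain ⟨q, hq, hq'⟩ := exists_meet l m
    rw [Finset.sum_eq_single q]
    · simp [lineWord, hq, hq']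
    · intro b _ hb
      simp only [lineWord]
      split_ifs with h1 h2
      · exact absurd (line_unique hb h1 hq h2 hq') h
      all_goals simp
    · simp

theorem Hcode_parity (c : ProjPt → ZMod 2) (hc : c ∈ Hcode) (m : ProjLine) :
    ∑ p, c p * lineWord m p = ∑ p, c p := by
  induction hc using Submodule.span_induction with
  | mem x hx =>
    obtain ⟨l, rfl⟩ := hx
    rw [sum_lineWord_mul, sum_lineWord]
  | zero => simp
  | add x y _ _ hx hy => simp [add_mul, Finset.sum_add_distrib, hx, hy]
  | smul a x _ hx => simp [mul_assoc, ← Finset.mul_sum, hx]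

theorem AutH_lineMap {σ : Equiv.Perm ProjPt} (hσ : σ ∈ AutH) : LineMap σ := by
  intro l
  have hc : (fun p => lineWord l (σ p)) ∈ Hcode :=
    (hσ _).2 (Submodule.subset_span ⟨l, rfl⟩)
  have hsum : ∑ p, lineWord l (σ p) = 1 := by
    rw [Equiv.sum_comp σ (lineWord l), sum_lineWord]
  obtain ⟨l', hl'⟩ := blocking ((ptsOn l).map σ.symm.toEmbedding) (by simp [card_ptsOn]) (by
    intro m
    have h := Hcode_parity _ hc m
    rw [hsum] at h
    obtain ⟨p, _, hp⟩ := Finset.exists_ne_zero_of_sum_ne_zero (h.trans_ne one_ne_zero)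
    have h1 := left_ne_zero_of_mul hp
    have h2 := right_ne_zero_of_mul hp
    simp only [lineWord, ne_eq, ite_eq_right_iff, one_ne_zero, imp_false, not_not] at h1 h2
    refine ⟨p, ?_, h2⟩
    simp [mem_ptsOn, h1])
  refine ⟨l', fun p => ?_⟩
  rw [← mem_ptsOn, ← hl']
  simp [mem_ptsOn]

theorem AutH_symm {σ : Equiv.Perm ProjPt} (hσ : σ ∈ AutH) : σ⁻¹ ∈ AutH := by
  intro w
  have := hσ (fun p => w (σ⁻¹ p))
  simpa using this.symm

theorem lineMap_mem {σ : Equiv.Perm ProjPt} (hσ : LineMap σ) (w : ProjPt → ZMod 2)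
    (hw : w ∈ Hcode) : (fun p => w (σ p)) ∈ Hcode := by
  induction hw using Submodule.span_induction with
  | mem x hx =>
    obtain ⟨l, rfl⟩ := hx
    obtain ⟨l', hl'⟩ := hσ l
    apply Submodule.subset_span
    refine ⟨l', ?_⟩
    funext p
    simp [lineWord, hl']
  | zero => exact zero_mem _
  | add x y _ _ hx hy => exact add_mem hx hy
  | smul a x _ hx => exact Submodule.smul_mem _ a hx

theorem mem_AutH_iff (σ : Equiv.Perm ProjPt) : σ ∈ AutH ↔ LineMap σ ∧ LineMap σ⁻¹ := by
  constructor
  · exact fun h => ⟨AutH_lineMap h, AutH_lineMap (AutH_symm h)⟩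
  · rintro ⟨h1, h2⟩ w
    refine ⟨fun h => ?_, fun h => lineMap_mem h1 w h⟩
    have := lineMap_mem h2 _ h
    simpa using this

theorem AutH_mul {σ τ : Equiv.Perm ProjPt} (hσ : σ ∈ AutH) (hτ : τ ∈ AutH) : σ * τ ∈ AutH := by
  intro w
  have h1 := hτ (fun p => w (σ p))
  exact h1.trans (hσ w)

theorem F4_two : (2 : F4) = 0 := by
  have := CharP.cast_eq_zero F4 2
  exact_mod_cast this

theorem F4_pow (x : F4) : x ^ 4 = x := by
  have h := FiniteField.pow_card x
  rwa [← Nat.card_eq_fintype_card, card_F4] at h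

theorem F4_quad (x : F4) (h0 : x ≠ 0) (h1 : x ≠ 1) : x ^ 2 = x + 1 := by
  have h := F4_pow x
  have h2 := F4_two
  have : (x * (x - 1)) * (x ^ 2 - (x + 1)) = 0 := by
    linear_combination h + (-x ^ 3 + x) * h2
  rcases mul_eq_zero.1 this with h3 | h3
  · rcases mul_eq_zero.1 h3 with h4 | h4
    · exact absurd h4 h0
    · exact absurd (sub_eq_zero.1 h4) h1
  · exact sub_eq_zero.1 h3

theorem exists_w : ∃ w : F4, w ≠ 0 ∧ w ≠ 1 := by
  by_contra! h
  have : Nat.card F4 ≤ Nat.card (Fin 2) := by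
    apply Nat.card_le_card_of_surjective (fun i : Fin 2 => if i = 0 then (0 : F4) else 1)
    intro x
    by_cases hx : x = 0
    · exact ⟨0, by simp [hx]⟩
    · exact ⟨1, by simp [h x hx]⟩
  rw [card_F4] at this
  simp at this

/-- a generator of F4 -/
noncomputable def w4 : F4 := exists_w.choose
theorem w4_ne0 : w4 ≠ 0 := exists_w.choose_spec.1
theorem w4_ne1 : w4 ≠ 1 := exists_w.choose_spec.2
theorem w4_sq : w4 ^ 2 = w4 + 1 := F4_quad _ w4_ne0 w4_ne1
theorem w4_succ_ne0 : w4 + 1 ≠ 0 := by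
  rw [← w4_sq]; exact pow_ne_zero _ w4_ne0
theorem w4_succ_ne : w4 + 1 ≠ w4 := by simp

theorem F4_cases (x : F4) : x = 0 ∨ x = 1 ∨ x = w4 ∨ x = w4 + 1 := by
  by_cases h0 : x = 0
  · exact Or.inl h0
  by_cases h1 : x = 1
  · exact Or.inr (Or.inl h1)
  have h := F4_quad x h0 h1
  have h2 := F4_two
  have hw := w4_sq
  have : (x - w4) * (x - (w4 + 1)) = 0 := by
    linear_combination h + hw + (1 + w4 - x*w4) * h2
  rcases mul_eq_zero.1 this with h3 | h3
  · exact Or.inr (Or.inr (Or.inl (sub_eq_zero.1 h3)))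
  · exact Or.inr (Or.inr (Or.inr (sub_eq_zero.1 h3)))

/-- Frobenius -/
noncomputable def frob4 : F4 ≃+* F4 := frobeniusEquiv F4 2

theorem frob4_apply (x : F4) : frob4 x = x ^ 2 := rfl
theorem frob4_w : frob4 w4 = w4 + 1 := by rw [frob4_apply, w4_sq]

theorem ringEquiv_ext_w {φ ψ : F4 ≃+* F4} (h : φ w4 = ψ w4) : φ = ψ := by
  ext x
  rcases F4_cases x with rfl | rfl | rfl | rfl <;> simp [h]

theorem ringEquiv_cases (φ : F4 ≃+* F4) : φ = RingEquiv.refl F4 ∨ φ = frob4 := by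
  rcases F4_cases (φ w4) with h | h | h | h
  · exact absurd ((map_eq_zero_iff φ φ.injective).1 h) w4_ne0
  · exact absurd ((map_eq_one_iff φ φ.injective).1 h) w4_ne1
  · exact Or.inl (ringEquiv_ext_w h)
  · exact Or.inr (ringEquiv_ext_w (h.trans frob4_w.symm))

theorem card_ringEquiv : Nat.card (F4 ≃+* F4) = 2 := by
  rw [Nat.card_eq_two_iff]
  refine ⟨RingEquiv.refl F4, frob4, ?_, ?_⟩
  · intro h
    have := congrArg (fun f : F4 ≃+* F4 => f w4) h
    simp [frob4_w] at this
  · ext φ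
    simpa using ringEquiv_cases φ

/-! ### Linear forms -/

/-- the kernel of a linear form -/
def kerForm (x y z : F4) : Submodule F4 V3 where
  carrier := {v | x * v 0 + y * v 1 + z * v 2 = 0}
  add_mem' := by
    intro a b ha hb
    simp only [Set.mem_ofPred_eq, Pi.add_apply] at *
    linear_combination ha + hb
  zero_mem' := by simp
  smul_mem' := by
    intro c a ha
    simp only [Set.mem_ofPred_eq, Pi.smul_apply, smul_eq_mul] at *
    linear_combination c * ha

theorem mem_kerForm {x y z : F4} {v : V3} :
    v ∈ kerForm x y z ↔ x * v 0 + y * v 1 + z * v 2 = 0 := Iff.rfl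

theorem finrank_kerForm {x y z : F4} (h : x ≠ 0 ∨ y ≠ 0 ∨ z ≠ 0) :
    Module.finrank F4 (kerForm x y z) = 2 := by
  let f : V3 →ₗ[F4] F4 :=
    { toFun := fun v => x * v 0 + y * v 1 + z * v 2
      map_add' := by intro a b; simp; ring
      map_smul' := by intro a b; simp; ring }
  have hk : kerForm x y z = LinearMap.ker f := by
    ext v; rfl
  have hs : Function.Surjective f := by
    intro t
    rcases h with h | h | h
    · exact ⟨![x⁻¹ * t, 0, 0], by simp [f, h]⟩
    · exact ⟨![0, y⁻¹ * t, 0], by simp [f, h]⟩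
    · exact ⟨![0, 0, z⁻¹ * t], by simp [f, h]⟩
  have := LinearMap.finrank_range_add_finrank_ker f
  rw [LinearMap.range_eq_top.2 hs, finrank_top, ← hk] at this
  simp at this
  omega

/-- line of a linear form -/
def lineForm (x y z : F4) (h : x ≠ 0 ∨ y ≠ 0 ∨ z ≠ 0) : ProjLine :=
  ⟨kerForm x y z, finrank_kerForm h⟩

/-- the point with given coordinates is fixed -/
def Fx (σ : Equiv.Perm ProjPt) (a b c : F4) : Prop := ∀ p : ProjPt, ![a, b, c] ∈ p.val → σ p = p

/-- the line with given coordinates is fixed -/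
def FL (σ : Equiv.Perm ProjPt) (x y z : F4) : Prop :=
  ∀ p : ProjPt, p.val ≤ kerForm x y z ↔ (σ p).val ≤ kerForm x y z

/-- vectors are not proportional -/
def NP (a b c a' b' c' : F4) : Prop :=
  a * b' - a' * b ≠ 0 ∨ a * c' - a' * c ≠ 0 ∨ b * c' - b' * c ≠ 0

theorem NP.ne0 {a b c a' b' c' : F4} (h : NP a b c a' b' c') : ![a, b, c] ≠ 0 := by
  intro h0
  have h1 : a = 0 := congrFun h0 0
  have h2 : b = 0 := congrFun h0 1
  have h3 : c = 0 := congrFun h0 2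
  simp [NP, h1, h2, h3] at h

theorem NP.swap {a b c a' b' c' : F4} (h : NP a b c a' b' c') : NP a' b' c' a b c := by
  unfold NP at *
  grind

theorem NP.ne {a b c a' b' c' : F4} (h : NP a b c a' b' c') {p q : ProjPt}
    (hp : ![a, b, c] ∈ p.val) (hq : ![a', b', c'] ∈ q.val) : p ≠ q := by
  rintro rfl
  rw [eq_span_of_mem p hp h.ne0, Submodule.mem_span_singleton] at hq
  obtain ⟨t, ht⟩ := hq
  have h1 : t * a = a' := congrFun ht 0
  have h2 : t * b = b' := congrFun ht 1
  have h3 : t * c = c' := congrFun ht 2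
  subst h1 h2 h3
  rcases h with h | h | h <;> apply h <;> ring

theorem fix_line {σ : Equiv.Perm ProjPt} (hσ : LineMap σ) {a b c a' b' c' : F4}
    (h1 : Fx σ a b c) (h2 : Fx σ a' b' c') (hn : NP a b c a' b' c') (x y z : F4)
    (h0 : x ≠ 0 ∨ y ≠ 0 ∨ z ≠ 0)
    (e1 : x * a + y * b + z * c = 0) (e2 : x * a' + y * b' + z * c' = 0) : FL σ x y z := by
  obtain ⟨l', hl'⟩ := hσ (lineForm x y z h0)
  have hp := mem_mkPt _ hn.ne0
  have hq := mem_mkPt _ hn.swap.ne0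
  have hp' : (mkPt _ hn.ne0).val ≤ (lineForm x y z h0).val := by
    rw [pt_le_iff _ hp hn.ne0]; exact e1
  have hq' : (mkPt _ hn.swap.ne0).val ≤ (lineForm x y z h0).val := by
    rw [pt_le_iff _ hq hn.swap.ne0]; exact e2
  have : l' = lineForm x y z h0 := by
    refine line_unique (hn.ne hp hq) ?_ ?_ hp' hq'
    · rw [hl', h1 _ hp]; exact hp'
    · rw [hl', h2 _ hq]; exact hq'
  subst this
  exact hl'

theorem fix_pt {σ : Equiv.Perm ProjPt} {x y z x' y' z' : F4}
    (h1 : FL σ x y z) (h2 : FL σ x' y' z') (hn : NP x y z x' y' z') (a b c : F4)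
    (h0 : a ≠ 0 ∨ b ≠ 0 ∨ c ≠ 0)
    (e1 : x * a + y * b + z * c = 0) (e2 : x' * a + y' * b + z' * c = 0) : Fx σ a b c := by
  intro p hp
  have h0' : ![a, b, c] ≠ 0 := by
    intro h
    have h1 : a = 0 := congrFun h 0
    have h2 : b = 0 := congrFun h 1
    have h3 : c = 0 := congrFun h 2
    simp [h1, h2, h3] at h0
  have hpl : p.val ≤ kerForm x y z := by rw [pt_le_iff _ hp h0']; exact e1
  have hpm : p.val ≤ kerForm x' y' z' := by rw [pt_le_iff _ hp h0']; exact e2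
  obtain ⟨v, hv, hv0⟩ := exists_vec (σ p)
  have f1 : x * v 0 + y * v 1 + z * v 2 = 0 := ((h1 p).1 hpl) hv
  have f2 : x' * v 0 + y' * v 1 + z' * v 2 = 0 := ((h2 p).1 hpm) hv
  have k1 : a * v 1 - b * v 0 = 0 := by
    rcases hn with h | h | h <;> apply mul_left_cancel₀ h <;> grind
  have k2 : a * v 2 - c * v 0 = 0 := by
    rcases hn with h | h | h <;> apply mul_left_cancel₀ h <;> grind
  have k3 : b * v 2 - c * v 1 = 0 := by
    rcases hn with h | h | h <;> apply mul_left_cancel₀ h <;> grind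
  refine pt_eq_of_mem hv ?_ hv0
  have hs : ∃ t : F4, v = t • ![a, b, c] := by
    rcases h0 with h | h | h
    · refine ⟨v 0 / a, ?_⟩
      ext i; fin_cases i <;> simp <;> field_simp <;> grind
    · refine ⟨v 1 / b, ?_⟩
      ext i; fin_cases i <;> simp <;> field_simp <;> grind
    · refine ⟨v 2 / c, ?_⟩
      ext i; fin_cases i <;> simp <;> field_simp <;> grind
  obtain ⟨t, ht⟩ := hs
  rw [ht]
  exact p.val.smul_mem _ hp

theorem exists_normal (p : ProjPt) : (∃ a b : F4, ![1, a, b] ∈ p.val) ∨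
    (∃ b : F4, ![0, 1, b] ∈ p.val) ∨ ![0, 0, 1] ∈ p.val := by
  obtain ⟨v, hv, hv0⟩ := exists_vec p
  by_cases h0 : v 0 = 0
  · by_cases h1 : v 1 = 0
    · have h2 : v 2 ≠ 0 := by
        intro h2
        apply hv0
        ext i; fin_cases i <;> simp [h0, h1, h2]
      right; right
      convert p.val.smul_mem (v 2)⁻¹ hv using 1
      ext i; fin_cases i <;> simp [h0, h1, h2]
    · right; left
      refine ⟨(v 1)⁻¹ * v 2, ?_⟩
      convert p.val.smul_mem (v 1)⁻¹ hv using 1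
      ext i; fin_cases i <;> simp [h0, h1]
  · left
    refine ⟨(v 0)⁻¹ * v 1, (v 0)⁻¹ * v 2, ?_⟩
    convert p.val.smul_mem (v 0)⁻¹ hv using 1
    ext i; fin_cases i <;> simp [h0]

theorem fix_diag {σ : Equiv.Perm ProjPt} (hσ : LineMap σ)
    (E1 : Fx σ 1 0 0) (E2 : Fx σ 0 1 0) (E3 : Fx σ 0 0 1) (U : Fx σ 1 1 1) : Fx σ 1 1 0 := by
  have h2 := F4_two
  have lz : FL σ 0 0 1 := fix_line hσ E1 E2 (by simp [NP]) _ _ _ (by simp) (by simp) (by simp)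
  have lxy : FL σ 1 1 0 :=
    fix_line hσ E3 U (by simp [NP]) _ _ _ (by simp) (by simp) (by linear_combination h2)
  exact fix_pt lz lxy (by simp [NP]) _ _ _ (by simp) (by simp) (by linear_combination h2)

theorem fix_all {σ : Equiv.Perm ProjPt} (hσ : LineMap σ)
    (E1 : Fx σ 1 0 0) (E2 : Fx σ 0 1 0) (E3 : Fx σ 0 0 1) (U : Fx σ 1 1 1)
    (W : Fx σ 1 w4 0) : σ = 1 := by
  have h2 := F4_two
  have hw0 := w4_ne0
  have hw1 := w4_ne1
  have hw2 := w4_succ_ne0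
  have hw := w4_sq
  have lz : FL σ 0 0 1 := fix_line hσ E1 E2 (by simp [NP]) _ _ _ (by simp) (by simp) (by simp)
  have ly : FL σ 0 1 0 := fix_line hσ E1 E3 (by simp [NP]) _ _ _ (by simp) (by simp) (by simp)
  have lx : FL σ 1 0 0 := fix_line hσ E2 E3 (by simp [NP]) _ _ _ (by simp) (by simp) (by simp)
  have lxy : FL σ 1 1 0 :=
    fix_line hσ E3 U (by simp [NP]) _ _ _ (by simp) (by simp) (by linear_combination h2)
  have lxz : FL σ 1 0 1 :=
    fix_line hσ E2 U (by simp [NP]) _ _ _ (by simp) (by simp) (by linear_combination h2)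
  have lyz : FL σ 0 1 1 :=
    fix_line hσ E1 U (by simp [NP]) _ _ _ (by simp) (by simp) (by linear_combination h2)
  -- y = w x
  have lw : FL σ w4 1 0 :=
    fix_line hσ E3 W (by simp [NP]) _ _ _ (by simp) (by simp) (by linear_combination w4 * h2)
  have p1 : Fx σ 1 w4 w4 := fix_pt lw lyz (by simp [NP]) _ _ _ (by simp)
    (by linear_combination w4 * h2) (by linear_combination w4 * h2)
  -- z = w x
  have lzw : FL σ w4 0 1 := fix_line hσ E2 p1 (by simp [NP]) _ _ _ (by simp)
    (by simp) (by linear_combination w4 * h2)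
  have p2 : Fx σ 1 1 w4 := fix_pt lxy lzw (by simp [NP]) _ _ _ (by simp)
    (by linear_combination h2) (by linear_combination w4 * h2)
  -- z = w y
  have lyw : FL σ 0 w4 1 := fix_line hσ E1 p2 (by simp [NP]) _ _ _ (by simp)
    (by simp) (by linear_combination w4 * h2)
  have p3 : Fx σ 1 w4 1 := fix_pt lw lxz (by simp [NP]) _ _ _ (by simp)
    (by linear_combination w4 * h2) (by linear_combination h2)
  -- z = (w + 1) y
  have lyv : FL σ 0 (w4 + 1) 1 := fix_line hσ E1 p3 (by simp [NP]) _ _ _ (by simp)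
    (by simp) (by linear_combination hw + (w4 + 1) * h2)
  have p4 : Fx σ 1 1 (w4 + 1) := fix_pt lxy lyv (by simp [NP]) _ _ _ (by simp)
    (by linear_combination h2) (by linear_combination (w4 + 1) * h2)
  -- z = (w + 1) x
  have lzv : FL σ (w4 + 1) 0 1 := fix_line hσ E2 p4 (by simp [NP]) _ _ _ (by simp)
    (by simp) (by linear_combination (w4 + 1) * h2)
  have p5 : Fx σ 1 (w4 + 1) 1 := fix_pt lxz lyw (by simp [NP]) _ _ _ (by simp)
    (by linear_combination h2) (by linear_combination hw + (w4 + 1) * h2)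
  -- y = (w + 1) x
  have lv : FL σ (w4 + 1) 1 0 := fix_line hσ E3 p5 (by simp [NP]) _ _ _ (by simp)
    (by simp) (by linear_combination (w4 + 1) * h2)
  have hY : ∀ a : F4, FL σ a 1 0 := by
    intro a
    rcases F4_cases a with rfl | rfl | rfl | rfl <;> assumption
  have hZ : ∀ a : F4, FL σ a 0 1 := by
    intro a
    rcases F4_cases a with rfl | rfl | rfl | rfl <;> assumption
  have hX : ∀ a : F4, FL σ 0 a 1 := by
    intro a
    rcases F4_cases a with rfl | rfl | rfl | rfl <;> assumption
  ext p
  rw [Equiv.Perm.one_apply]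
  rcases exists_normal p with ⟨a, b, h⟩ | ⟨b, h⟩ | h
  · exact fix_pt (hY a) (hZ b) (by simp [NP]) 1 a b (by simp)
      (by linear_combination a * h2) (by linear_combination b * h2) p h
  · exact fix_pt lx (hX b) (by simp [NP]) 0 1 b (by simp)
      (by simp) (by linear_combination b * h2) p h
  · exact E3 p h

/-! ### Semilinear maps -/

/-- semilinearity of a bijection -/
def IsSL (φ : F4 ≃+* F4) (g : V3 ≃ V3) : Prop :=
  (∀ x y, g (x + y) = g x + g y) ∧ (∀ (c : F4) (x), g (c • x) = φ c • g x)

theorem IsSL.symm {φ : F4 ≃+* F4} {g : V3 ≃ V3} (h : IsSL φ g) : IsSL φ.symm g.symm := by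
  refine ⟨fun x y => ?_, fun c x => ?_⟩
  · apply g.injective
    simp [h.1]
  · apply g.injective
    simp [h.2]

theorem IsSL.zero {φ : F4 ≃+* F4} {g : V3 ≃ V3} (h : IsSL φ g) : g 0 = 0 := by
  have := h.2 0 0
  simpa using this

/-- image of a subspace -/
def imS {φ : F4 ≃+* F4} {g : V3 ≃ V3} (h : IsSL φ g) (p : Submodule F4 V3) :
    Submodule F4 V3 where
  carrier := g '' p
  add_mem' := by
    rintro _ _ ⟨a, ha, rfl⟩ ⟨b, hb, rfl⟩
    exact ⟨a + b, p.add_mem ha hb, h.1 a b⟩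
  zero_mem' := ⟨0, p.zero_mem, h.zero⟩
  smul_mem' := by
    rintro c _ ⟨a, ha, rfl⟩
    exact ⟨φ.symm c • a, p.smul_mem _ ha, by rw [h.2]; simp⟩

theorem mem_imS {φ : F4 ≃+* F4} {g : V3 ≃ V3} (h : IsSL φ g) (p : Submodule F4 V3) (v : V3) :
    v ∈ imS h p ↔ g.symm v ∈ p := by
  constructor
  · rintro ⟨a, ha, rfl⟩
    simpa using ha
  · intro hv
    exact ⟨g.symm v, hv, by simp⟩

theorem card_sub (p : Submodule F4 V3) : Nat.card p = 4 ^ Module.finrank F4 p := by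
  have := Module.card_eq_pow_finrank (K := F4) (V := p)
  rwa [← Nat.card_eq_fintype_card, ← Nat.card_eq_fintype_card, card_F4] at this

theorem finrank_imS {φ : F4 ≃+* F4} {g : V3 ≃ V3} (h : IsSL φ g) (p : Submodule F4 V3) :
    Module.finrank F4 (imS h p) = Module.finrank F4 p := by
  apply Nat.pow_right_injective (le_refl 2 |>.trans (by norm_num : 2 ≤ 4))
  simp only
  rw [← card_sub, ← card_sub]
  exact Nat.card_image_of_injective g.injective (p : Set V3)

/-- induced permutation -/
noncomputable def permOf {φ : F4 ≃+* F4} {g : V3 ≃ V3} (h : IsSL φ g) : Equiv.Perm ProjPt where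
  toFun p := ⟨imS h p.val, by rw [finrank_imS]; exact p.2⟩
  invFun p := ⟨imS h.symm p.val, by rw [finrank_imS]; exact p.2⟩
  left_inv := by
    intro p
    apply ProjPt.ext
    ext v
    simp [mem_imS]
  right_inv := by
    intro p
    apply ProjPt.ext
    ext v
    simp [mem_imS]

theorem permOf_mem {φ : F4 ≃+* F4} {g : V3 ≃ V3} (h : IsSL φ g) : permOf h ∈ PGammaL :=
  ⟨φ, g, h.1, h.2, fun _ => rfl⟩

theorem mem_permOf {φ : F4 ≃+* F4} {g : V3 ≃ V3} (h : IsSL φ g) {p : ProjPt} {v : V3}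
    (hv : v ∈ p.val) : g v ∈ (permOf h p).val := ⟨v, hv, rfl⟩

theorem mem_PGammaL_iff (σ : Equiv.Perm ProjPt) :
    σ ∈ PGammaL ↔ ∃ (φ : F4 ≃+* F4) (g : V3 ≃ V3) (h : IsSL φ g), σ = permOf h := by
  constructor
  · rintro ⟨φ, g, h1, h2, h3⟩
    refine ⟨φ, g, ⟨h1, h2⟩, ?_⟩
    ext p
    apply ProjPt.ext
    apply SetLike.coe_injective
    exact h3 p
  · rintro ⟨φ, g, h, rfl⟩
    exact permOf_mem h

theorem permOf_lineMap {φ : F4 ≃+* F4} {g : V3 ≃ V3} (h : IsSL φ g) : LineMap (permOf h) := by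
  intro l
  refine ⟨⟨imS h.symm l.val, by rw [finrank_imS]; exact l.2⟩, fun p => ?_⟩
  constructor
  · rintro hp _ ⟨v, hv, rfl⟩
    have := (mem_imS h.symm l.val v).1 (hp hv)
    simpa using this
  · intro hp v hv
    rw [mem_imS]
    exact hp (mem_permOf h hv)

theorem permOf_inv {φ : F4 ≃+* F4} {g : V3 ≃ V3} (h : IsSL φ g) :
    (permOf h)⁻¹ = permOf h.symm := rfl

theorem PGammaL_sub : PGammaL ⊆ AutH := by
  intro σ hσ
  obtain ⟨φ, g, h, rfl⟩ := (mem_PGammaL_iff σ).1 hσ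
  rw [mem_AutH_iff, permOf_inv]
  exact ⟨permOf_lineMap h, permOf_lineMap h.symm⟩

theorem PGammaL_mul {σ τ : Equiv.Perm ProjPt} (hσ : σ ∈ PGammaL) (hτ : τ ∈ PGammaL) :
    σ * τ ∈ PGammaL := by
  obtain ⟨φ, g, h1, h2, h3⟩ := hσ
  obtain ⟨ψ, k, k1, k2, k3⟩ := hτ
  refine ⟨ψ.trans φ, k.trans g, by simp [h1, k1], by simp [h2, k2], fun p => ?_⟩
  rw [Equiv.Perm.mul_apply, h3, k3, Set.image_image]
  rfl

/-- the semilinear bijection from a field automorphism and a linear bijection -/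
noncomputable def gOf (φ : F4 ≃+* F4) (L : V3 ≃ₗ[F4] V3) : V3 ≃ V3 where
  toFun v := L (fun i => φ (v i))
  invFun v := fun i => φ.symm (L.symm v i)
  left_inv := by intro v; simp
  right_inv := by intro v; simp

theorem gOf_apply (φ : F4 ≃+* F4) (L : V3 ≃ₗ[F4] V3) (v : V3) :
    gOf φ L v = L (fun i => φ (v i)) := rfl

theorem gOf_SL (φ : F4 ≃+* F4) (L : V3 ≃ₗ[F4] V3) : IsSL φ (gOf φ L) := by
  constructor
  · intro x y
    rw [gOf_apply, gOf_apply, gOf_apply, ← map_add]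
    congr 1
    ext i; simp
  · intro c x
    rw [gOf_apply, gOf_apply, ← map_smul]
    congr 1
    ext i; simp

/-- not collinear -/
def NC (p q r : ProjPt) : Prop := ∀ l : ProjLine, p.val ≤ l.val → q.val ≤ l.val → ¬ r.val ≤ l.val

theorem NC.map {σ : Equiv.Perm ProjPt} (hσ : LineMap σ) {p q r : ProjPt} (h : NC p q r) :
    NC (σ p) (σ q) (σ r) := by
  intro l hp hq hr
  obtain ⟨l', hl'⟩ := hσ l
  exact h l' ((hl' p).2 hp) ((hl' q).2 hq) ((hl' r).2 hr)

theorem NC.coeff {p q r : ProjPt} (h : NC p q r) (hpq : p ≠ q) {u v x : V3} (hu : u ∈ p.val)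
    (hv : v ∈ q.val) (hx : x ∈ r.val) (hx0 : x ≠ 0) (a b c : F4)
    (he : a • u + b • v + c • x = 0) : c = 0 := by
  by_contra hc
  apply h (joinL p q hpq) (left_le_joinL _ _ _) (right_le_joinL _ _ _)
  rw [pt_le_iff r hx hx0]
  have h1 : c • x ∈ (joinL p q hpq).val := by
    have : c • x = -(a • u + b • v) := by rw [eq_neg_iff_add_eq_zero, add_comm, he]
    rw [this]
    apply Submodule.neg_mem
    apply Submodule.add_mem
    · exact Submodule.smul_mem _ _ (left_le_joinL _ _ _ hu)
    · exact Submodule.smul_mem _ _ (right_le_joinL _ _ _ hv)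
  exact (Submodule.smul_mem_iff _ hc).1 h1

theorem exists_frame_lin (P Q R U : ProjPt) (hPQ : P ≠ Q) (hPR : P ≠ R) (hQR : Q ≠ R)
    (h1 : NC P Q R) (h2 : NC P Q U) (h3 : NC P R U) (h4 : NC Q R U) :
    ∃ L : V3 ≃ₗ[F4] V3, L ![1, 0, 0] ∈ P.val ∧ L ![0, 1, 0] ∈ Q.val ∧ L ![0, 0, 1] ∈ R.val ∧
      L ![1, 1, 1] ∈ U.val := by
  obtain ⟨p, hp, hp0⟩ := exists_vec P
  obtain ⟨q, hq, hq0⟩ := exists_vec Q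
  obtain ⟨r, hr, hr0⟩ := exists_vec R
  obtain ⟨u, hu, hu0⟩ := exists_vec U
  have hind : ∀ (p q r : V3), p ∈ P.val → q ∈ Q.val → r ∈ R.val → p ≠ 0 → q ≠ 0 → r ≠ 0 →
      LinearIndependent F4 ![p, q, r] := by
    intro p q r hp hq hr hp0 hq0 hr0
    rw [Fintype.linearIndependent_iff]
    intro g hg
    have he : g 0 • p + g 1 • q + g 2 • r = 0 := by
      rw [← hg, Fin.sum_univ_three]; rfl
    have k2 : g 2 = 0 := h1.coeff hPQ hp hq hr hr0 _ _ _ he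
    have k1 : g 1 = 0 := NC.coeff (p := P) (q := R) (r := Q) (fun l a b c => h1 l a c b)
      hPR hp hr hq hq0 (g 0) (g 2) _ (by rw [← he]; abel)
    have k0 : g 0 = 0 := NC.coeff (p := Q) (q := R) (r := P) (fun l a b c => h1 l c a b)
      hQR hq hr hp hp0 (g 1) (g 2) _ (by rw [← he]; abel)
    intro i
    fin_cases i
    · exact k0
    · exact k1
    · exact k2
  let B := basisOfLinearIndependentOfCardEqFinrank (hind p q r hp hq hr hp0 hq0 hr0) (by simp)
  have hB : ∀ i, B i = ![p, q, r] i := by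
    intro i; simp [B]
  have hsum : u = B.repr u 0 • p + B.repr u 1 • q + B.repr u 2 • r := by
    conv_lhs => rw [← B.sum_repr u, Fin.sum_univ_three]
    simp [hB]
  set a := B.repr u 0
  set b := B.repr u 1
  set c := B.repr u 2
  have ha : a ≠ 0 := by
    intro h
    rw [h] at hsum
    have := h4.coeff hQR hq hr hu hu0 b c (-1) (by rw [hsum]; simp; abel)
    simp at this
  have hb : b ≠ 0 := by
    intro h
    rw [h] at hsum
    have := h3.coeff hPR hp hr hu hu0 a c (-1) (by rw [hsum]; simp; abel)
    simp at this
  have hc : c ≠ 0 := by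
    intro h
    rw [h] at hsum
    have := h2.coeff hPQ hp hq hu hu0 a b (-1) (by rw [hsum]; simp; abel)
    simp at this
  let C := basisOfLinearIndependentOfCardEqFinrank (hind (a • p) (b • q) (c • r)
    (P.val.smul_mem _ hp) (Q.val.smul_mem _ hq) (R.val.smul_mem _ hr) (smul_ne_zero ha hp0)
    (smul_ne_zero hb hq0) (smul_ne_zero hc hr0)) (by simp)
  have hC : ∀ i, C i = ![a • p, b • q, c • r] i := by
    intro i; simp [C]
  have hL : ∀ v, C.equivFun.symm v = v 0 • (a • p) + v 1 • (b • q) + v 2 • (c • r) := by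
    intro v
    rw [Module.Basis.equivFun_symm_apply, Fin.sum_univ_three]
    simp [hC]
  refine ⟨C.equivFun.symm, ?_, ?_, ?_, ?_⟩
  · rw [hL]; simpa using P.val.smul_mem _ hp
  · rw [hL]; simpa using Q.val.smul_mem _ hq
  · rw [hL]; simpa using R.val.smul_mem _ hr
  · rw [hL]; simpa [← hsum] using hu

theorem vec_ne0 {a b c : F4} (h : a ≠ 0 ∨ b ≠ 0 ∨ c ≠ 0) : ![a, b, c] ≠ 0 := by
  intro h0
  have h1 : a = 0 := congrFun h0 0
  have h2 : b = 0 := congrFun h0 1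
  have h3 : c = 0 := congrFun h0 2
  simp [h1, h2, h3] at h

theorem NC_of_form {a b c a' b' c' d e f x y z : F4} {p q r : ProjPt}
    (hp : ![a, b, c] ∈ p.val) (hq : ![a', b', c'] ∈ q.val) (hr : ![d, e, f] ∈ r.val)
    (hn : NP a b c a' b' c') (h0 : x ≠ 0 ∨ y ≠ 0 ∨ z ≠ 0)
    (e1 : x * a + y * b + z * c = 0) (e2 : x * a' + y * b' + z * c' = 0)
    (e3 : x * d + y * e + z * f ≠ 0) : NC p q r := by
  intro l hpl hql hrl
  have : l = lineForm x y z h0 := by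
    refine line_unique (hn.ne hp hq) hpl hql ?_ ?_
    · rw [pt_le_iff _ hp hn.ne0]; exact e1
    · rw [pt_le_iff _ hq hn.swap.ne0]; exact e2
  subst this
  exact e3 (hrl hr)

theorem Fx_of {σ : Equiv.Perm ProjPt} {a b c : F4} {p : ProjPt} (hp : ![a, b, c] ∈ p.val)
    (h0 : a ≠ 0 ∨ b ≠ 0 ∨ c ≠ 0) (h : σ p = p) : Fx σ a b c := by
  intro q hq
  rw [pt_eq_of_mem hq hp (vec_ne0 h0), h]

theorem frame_fixed_mem {σ : Equiv.Perm ProjPt} (hσ : σ ∈ AutH)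
    (E1 : Fx σ 1 0 0) (E2 : Fx σ 0 1 0) (E3 : Fx σ 0 0 1) (U : Fx σ 1 1 1) : σ ∈ PGammaL := by
  have hlm := AutH_lineMap hσ
  have D := fix_diag hlm E1 E2 E3 U
  have lz : FL σ 0 0 1 := fix_line hlm E1 E2 (by simp [NP]) _ _ _ (by simp) (by simp) (by simp)
  have w0 : ![1, w4, 0] ≠ 0 := vec_ne0 (by simp)
  set W := mkPt ![1, w4, 0] w0 with hW
  have hWm : ![1, w4, 0] ∈ W.val := mem_mkPt _ _
  have hWz : (σ W).val ≤ kerForm 0 0 1 := by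
    rw [← lz, pt_le_iff _ hWm w0, mem_kerForm]; simp
  have hne : ∀ {a b c : F4}, Fx σ a b c → NP 1 w4 0 a b c → ¬ ![a, b, c] ∈ (σ W).val := by
    intro a b c hfx hnp hmem
    have h1 : σ (σ W) = σ W := hfx _ hmem
    have h2 : σ W = W := σ.injective h1
    rw [h2] at hmem
    exact hnp.ne hWm hmem rfl
  have key : ![1, w4, 0] ∈ (σ W).val ∨ ![1, w4 + 1, 0] ∈ (σ W).val := by
    rcases exists_normal (σ W) with ⟨a, b, h⟩ | ⟨b, h⟩ | h
    · have hb := hWz h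
      simp [mem_kerForm] at hb
      subst hb
      rcases F4_cases a with rfl | rfl | rfl | rfl
      · exact absurd h (hne E1 (by simp [NP, w4_ne0]))
      · refine absurd h (hne D (Or.inl ?_))
        have := w4_ne1
        intro h
        apply this
        linear_combination -h
      · exact Or.inl h
      · exact Or.inr h
    · have hb := hWz h
      simp [mem_kerForm] at hb
      subst hb
      exact absurd h (hne E2 (by simp [NP]))
    · have hb := hWz h
      simp [mem_kerForm] at hb
  rcases key with h | h
  · have : σ = 1 := fix_all hlm E1 E2 E3 U
      (Fx_of hWm (by simp) (pt_eq_of_mem h hWm w0))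
    rw [this]
    exact ⟨RingEquiv.refl _, Equiv.refl _, by simp, by simp, by simp⟩
  · let hg := gOf_SL frob4 (LinearEquiv.refl F4 V3)
    have hgv : ∀ a b c : F4, gOf frob4 (LinearEquiv.refl F4 V3) ![a, b, c] =
        ![frob4 a, frob4 b, frob4 c] := by
      intro a b c
      rw [gOf_apply]
      ext i; fin_cases i <;> simp
    have hτ := permOf_mem hg
    set τ := permOf hg with hτdef
    have hρ : τ⁻¹ * σ ∈ AutH := AutH_mul (AutH_symm (PGammaL_sub hτ)) hσ
    have hfix : ∀ {a b c : F4}, Fx σ a b c → (a ≠ 0 ∨ b ≠ 0 ∨ c ≠ 0) → frob4 a = a →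
        frob4 b = b → frob4 c = c → Fx (τ⁻¹ * σ) a b c := by
      intro a b c hf h0 ha hb hc p hp
      rw [Equiv.Perm.mul_apply, hf p hp, Equiv.Perm.inv_eq_iff_eq]
      refine pt_eq_of_mem hp ?_ (vec_ne0 h0)
      have := mem_permOf hg hp
      rwa [hgv, ha, hb, hc] at this
    have hone : τ⁻¹ * σ = 1 := by
      refine fix_all (AutH_lineMap hρ) (hfix E1 (by simp) (by simp) (by simp) (by simp))
        (hfix E2 (by simp) (by simp) (by simp) (by simp))
        (hfix E3 (by simp) (by simp) (by simp) (by simp))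
        (hfix U (by simp) (by simp) (by simp) (by simp)) (Fx_of hWm (by simp) ?_)
      rw [Equiv.Perm.mul_apply, Equiv.Perm.inv_eq_iff_eq]
      refine pt_eq_of_mem h ?_ (vec_ne0 (by simp))
      have := mem_permOf hg hWm
      rwa [hgv, frob4_w, map_one, map_zero] at this
    have : σ = τ := by
      rw [inv_mul_eq_one] at hone
      exact hone.symm
    rw [this]
    exact hτ

theorem AutH_sub : AutH ⊆ PGammaL := by
  intro σ hσ
  have hlm := AutH_lineMap hσ
  have m1 := mem_mkPt ![1, 0, 0] (vec_ne0 (by simp))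
  have m2 := mem_mkPt ![0, 1, 0] (vec_ne0 (by simp))
  have m3 := mem_mkPt ![0, 0, 1] (vec_ne0 (by simp))
  have m4 := mem_mkPt ![1, 1, 1] (vec_ne0 (by simp))
  set P := mkPt ![1, 0, 0] (vec_ne0 (by simp))
  set Q := mkPt ![0, 1, 0] (vec_ne0 (by simp))
  set R := mkPt ![0, 0, 1] (vec_ne0 (by simp))
  set U := mkPt ![1, 1, 1] (vec_ne0 (by simp))
  have n12 : NP (1 : F4) 0 0 0 1 0 := by simp [NP]
  have n13 : NP (1 : F4) 0 0 0 0 1 := by simp [NP]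
  have n23 : NP (0 : F4) 1 0 0 0 1 := by simp [NP]
  obtain ⟨L, l1, l2, l3, l4⟩ := exists_frame_lin (σ P) (σ Q) (σ R) (σ U)
    (σ.injective.ne (n12.ne m1 m2)) (σ.injective.ne (n13.ne m1 m3))
    (σ.injective.ne (n23.ne m2 m3))
    ((NC_of_form (x := 0) (y := 0) (z := 1) m1 m2 m3 n12 (by simp) (by simp) (by simp)
      (by simp)).map hlm)
    ((NC_of_form (x := 0) (y := 0) (z := 1) m1 m2 m4 n12 (by simp) (by simp) (by simp)
      (by simp)).map hlm)
    ((NC_of_form (x := 0) (y := 1) (z := 0) m1 m3 m4 n13 (by simp) (by simp) (by simp)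
      (by simp)).map hlm)
    ((NC_of_form (x := 1) (y := 0) (z := 0) m2 m3 m4 n23 (by simp) (by simp) (by simp)
      (by simp)).map hlm)
  let hg := gOf_SL (RingEquiv.refl F4) L
  have hgv : ∀ v, gOf (RingEquiv.refl F4) L v = L v := fun v => rfl
  have hτ := permOf_mem hg
  set τ := permOf hg with hτdef
  have hρ : τ⁻¹ * σ ∈ AutH := AutH_mul (AutH_symm (PGammaL_sub hτ)) hσ
  have hfix : ∀ {a b c : F4} {p : ProjPt}, ![a, b, c] ∈ p.val → (a ≠ 0 ∨ b ≠ 0 ∨ c ≠ 0) →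
      L ![a, b, c] ∈ (σ p).val → Fx (τ⁻¹ * σ) a b c := by
    intro a b c p hp h0 hL
    refine Fx_of hp h0 ?_
    rw [Equiv.Perm.mul_apply, Equiv.Perm.inv_eq_iff_eq]
    refine pt_eq_of_mem hL ?_ ?_
    · exact mem_permOf hg hp
    · simpa using vec_ne0 h0
  have hmem := frame_fixed_mem hρ (hfix m1 (by simp) l1) (hfix m2 (by simp) l2)
    (hfix m3 (by simp) l3) (hfix m4 (by simp) l4)
  have := PGammaL_mul hτ hmem
  simpa using this

theorem AutH_eq : AutH = PGammaL := Set.Subset.antisymm AutH_sub PGammaL_sub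

/-! ### Counting -/

/-- semilinear data -/
abbrev SL : Type := (F4 ≃+* F4) × (V3 ≃ₗ[F4] V3)

/-- permutation of semilinear data -/
noncomputable def permSL (x : SL) : Equiv.Perm ProjPt := permOf (gOf_SL x.1 x.2)

theorem permSL_surj {σ : Equiv.Perm ProjPt} (hσ : σ ∈ PGammaL) : ∃ x : SL, permSL x = σ := by
  obtain ⟨φ, g, h, rfl⟩ := (mem_PGammaL_iff σ).1 hσ
  let L : V3 ≃ₗ[F4] V3 :=
    { toFun := fun v => g (fun i => φ.symm (v i))
      invFun := fun v => fun i => φ (g.symm v i)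
      left_inv := by intro v; simp
      right_inv := by intro v; simp
      map_add' := by
        intro x y
        rw [← h.1]
        congr 1
        ext i; simp
      map_smul' := by
        intro c x
        have := h.2 (φ.symm c) (fun i => φ.symm (x i))
        simp only [RingEquiv.apply_symm_apply] at this
        rw [RingHom.id_apply, ← this]
        congr 1
        ext i; simp }
  refine ⟨(φ, L), ?_⟩
  have hL : gOf φ L = g := by
    ext1 v
    rw [gOf_apply]
    simp [L]
  ext p
  apply ProjPt.ext
  apply SetLike.coe_injective
  change gOf φ L '' _ = g '' _
  rw [hL]

theorem permSL_scal {φ : F4 ≃+* F4} {L M : V3 ≃ₗ[F4] V3} {c : F4} (hc : c ≠ 0)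
    (h : ∀ v, M v = c • L v) : permSL (φ, M) = permSL (φ, L) := by
  ext p
  obtain ⟨v, hv, hv0⟩ := exists_vec p
  have h1 : gOf φ M v ∈ (permSL (φ, M) p).val := mem_permOf (gOf_SL φ M) hv
  have h2 : gOf φ L v ∈ (permSL (φ, L) p).val := mem_permOf (gOf_SL φ L) hv
  refine pt_eq_of_mem h1 ?_ ?_
  · rw [gOf_apply, h]
    exact Submodule.smul_mem _ _ h2
  · rw [← (gOf_SL φ M).zero]
    exact (gOf φ M).injective.ne hv0

theorem permSL_inj {φ ψ : F4 ≃+* F4} {L M : V3 ≃ₗ[F4] V3} (h : permSL (φ, L) = permSL (ψ, M)) :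
    φ = ψ ∧ ∃ c : F4, c ≠ 0 ∧ ∀ v, M v = c • L v := by
  have key : ∀ v : V3, v ≠ 0 → ∃ t : F4,
      L.symm (M (fun i => ψ (v i))) = t • (fun i => φ (v i)) := by
    intro v hv0
    have hv := mem_mkPt v hv0
    have h1 : gOf φ L v ∈ (permSL (φ, L) (mkPt v hv0)).val := mem_permOf (gOf_SL φ L) hv
    have h2 : gOf ψ M v ∈ (permSL (ψ, M) (mkPt v hv0)).val := mem_permOf (gOf_SL ψ M) hv
    rw [← h] at h2
    have h3 : gOf φ L v ≠ 0 := by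
      rw [← (gOf_SL φ L).zero]
      exact (gOf φ L).injective.ne hv0
    rw [eq_span_of_mem _ h1 h3, Submodule.mem_span_singleton] at h2
    obtain ⟨t, ht⟩ := h2
    refine ⟨t, ?_⟩
    rw [gOf_apply, gOf_apply] at ht
    rw [← ht, map_smul, LinearEquiv.symm_apply_apply]
  let N : V3 ≃ₗ[F4] V3 := M.trans L.symm
  have hN : ∀ v, L.symm (M v) = N v := fun v => rfl
  have e3 : ∀ (χ : F4 ≃+* F4) (a b c : F4),
      (fun i => χ (![a, b, c] i)) = ![χ a, χ b, χ c] := by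
    intro χ a b c
    ext i; fin_cases i <;> simp
  have key' : ∀ a b c : F4, (a ≠ 0 ∨ b ≠ 0 ∨ c ≠ 0) → ∃ t : F4,
      N ![ψ a, ψ b, ψ c] = t • ![φ a, φ b, φ c] := by
    intro a b c h0
    obtain ⟨t, ht⟩ := key _ (vec_ne0 h0)
    rw [e3, e3, hN] at ht
    exact ⟨t, ht⟩
  obtain ⟨t1, h1⟩ := key' 1 0 0 (by simp)
  obtain ⟨t2, h2⟩ := key' 0 1 0 (by simp)
  obtain ⟨t3, h3⟩ := key' 0 0 1 (by simp)
  obtain ⟨t, h4⟩ := key' 1 1 1 (by simp)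
  obtain ⟨s, h5⟩ := key' 1 w4 0 (by simp)
  simp only [map_one, map_zero] at h1 h2 h3 h4 h5
  have hform : ∀ v : V3, N v = ![v 0 * t1, v 1 * t2, v 2 * t3] := by
    intro v
    have : v = v 0 • ![1, 0, 0] + v 1 • ![0, 1, 0] + v 2 • ![0, 0, 1] := by
      ext i; fin_cases i <;> simp
    conv_lhs => rw [this]
    rw [map_add, map_add, map_smul, map_smul, map_smul, h1, h2, h3]
    ext i; fin_cases i <;> simp
  rw [hform] at h4 h5
  have a1 : t1 = t := by simpa using congrFun h4 0
  have a2 : t2 = t := by simpa using congrFun h4 1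
  have a3 : t3 = t := by simpa using congrFun h4 2
  have b1 : t1 = s := by simpa using congrFun h5 0
  have b2 : ψ w4 * t2 = s * φ w4 := by simpa using congrFun h5 1
  have hNt : ∀ v : V3, N v = t • v := by
    intro v
    rw [hform, a1, a2, a3]
    ext i; fin_cases i <;> simp [mul_comm]
  have ht : t ≠ 0 := by
    intro h0
    have : N ![1, 0, 0] = 0 := by rw [hNt, h0, zero_smul]
    exact vec_ne0 (a := (1 : F4)) (b := 0) (c := 0) (by simp)
      ((LinearEquiv.map_eq_zero_iff N).1 this)
  refine ⟨ringEquiv_ext_w ?_, t, ht, fun v => ?_⟩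
  · rw [← b1, a1, a2] at b2
    apply mul_left_cancel₀ ht
    rw [← b2, mul_comm]
  · have := hNt v
    rw [← hN, LinearEquiv.symm_apply_eq, map_smul] at this
    exact this

theorem card_SL : Nat.card SL = 2 * 181440 := by
  rw [Nat.card_prod, card_ringEquiv]
  congr 1
  have e : GL (Fin 3) F4 ≃* (V3 ≃ₗ[F4] V3) :=
    Matrix.GeneralLinearGroup.toLin.trans (LinearMap.GeneralLinearGroup.generalLinearEquiv F4 V3)
  rw [← Nat.card_congr e.toEquiv, Matrix.card_GL_field, ← Nat.card_eq_fintype_card, card_F4]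
  simp [Fin.prod_univ_three]

theorem card_PGammaL : Nat.card ↥PGammaL = 120960 := by
  choose s hs using fun σ : ↥PGammaL => permSL_surj σ.2
  let f : F4ˣ × ↥PGammaL → SL := fun x =>
    ((s x.2).1, (s x.2).2.trans (LinearEquiv.smulOfUnit x.1))
  have hf2 : ∀ c σ v, (f (c, σ)).2 v = (c : F4) • (s σ).2 v := fun c σ v => rfl
  have hperm : ∀ c σ, permSL (f (c, σ)) = σ := by
    intro c σ
    refine Eq.trans ?_ (hs σ)
    exact permSL_scal c.ne_zero (hf2 c σ)
  have hbij : Function.Bijective f := by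
    constructor
    · rintro ⟨c, σ⟩ ⟨d, τ⟩ h
      have hστ : σ = τ := by
        apply Subtype.ext
        rw [← hperm c σ, ← hperm d τ, h]
      subst hστ
      have h1 := hf2 c σ ((s σ).2.symm ![1, 0, 0])
      rw [h, hf2] at h1
      have h2 := congrFun h1 0
      simp at h2
      rw [Units.ext h2]
    · rintro ⟨φ, L⟩
      have hm : permSL (φ, L) ∈ PGammaL := permOf_mem _
      have h1 : permSL ((s ⟨_, hm⟩).1, (s ⟨_, hm⟩).2) = permSL (φ, L) := hs ⟨_, hm⟩
      obtain ⟨h2, c, hc, h3⟩ := permSL_inj h1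
      refine ⟨(Units.mk0 c hc, ⟨_, hm⟩), ?_⟩
      refine Prod.ext h2 ?_
      apply LinearEquiv.ext
      intro v
      rw [hf2, h3]
      rfl
  have hcard := Nat.card_congr (Equiv.ofBijective f hbij)
  rw [card_SL, Nat.card_prod, Nat.card_units, card_F4] at hcard
  omega

/-- the automorphism group of `H` is exactly `PΓL(3,4)`,
of order 120960. -/
theorem autH_eq_PGammaL : AutH = PGammaL ∧ Nat.card ↥AutH = 120960 := by
  refine ⟨AutH_eq, ?_⟩
  rw [AutH_eq]
  exact card_PGammaL
end

section
/- Let A = (0^{21},4,0,−4), B = (0^{21},0,4,−4) in the Leech lattice Λ₂₄ and let R_{AB} be the rank-2 sublattice (Z-span of A and B, saturated in Λ₂₄) containing A and B. Then the sublattice of Λ₂₄ generated by all differences T − T′ with T, T′ ∈ T_{AB} equals the orthogonal complement R_{AB}^⊥ of R_{AB} in Λ₂₄. -/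
open scoped BigOperators

/-- A generator matrix of the extended binary Golay code (MOG coordinates). -/
def golayMatrix : Matrix (Fin 12) (Fin 24) (ZMod 2) :=
  !![0, 0, 0, 0, 0, 0, 0, 0, 0, 0, 0, 0, 0, 0, 0, 0, 1, 1, 1, 1, 1, 1, 1, 1;
    0, 0, 0, 0, 0, 0, 0, 0, 0, 0, 0, 0, 1, 1, 1, 1, 0, 0, 0, 0, 1, 1, 1, 1;
    0, 0, 0, 0, 0, 0, 0, 0, 0, 0, 1, 1, 0, 0, 1, 1, 0, 0, 1, 1, 0, 0, 1, 1;
    0, 0, 0, 0, 0, 0, 0, 0, 0, 1, 0, 1, 0, 1, 0, 1, 0, 1, 0, 1, 0, 1, 0, 1;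
    0, 0, 0, 0, 0, 0, 0, 0, 1, 0, 0, 1, 0, 1, 1, 0, 0, 1, 1, 0, 1, 0, 0, 1;
    0, 0, 0, 0, 0, 0, 1, 1, 0, 0, 0, 0, 0, 0, 1, 1, 0, 1, 1, 0, 0, 1, 0, 1;
    0, 0, 0, 0, 0, 1, 0, 1, 0, 0, 0, 0, 0, 1, 0, 1, 0, 0, 1, 1, 0, 1, 1, 0;
    0, 0, 0, 0, 1, 0, 0, 1, 0, 0, 0, 0, 0, 1, 1, 0, 0, 1, 0, 1, 1, 1, 0, 0;
    0, 0, 0, 1, 0, 0, 0, 1, 0, 0, 0, 1, 0, 0, 0, 1, 0, 1, 1, 1, 1, 0, 0, 0;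
    0, 0, 1, 0, 0, 0, 0, 1, 0, 0, 0, 1, 0, 0, 1, 0, 0, 0, 1, 0, 1, 1, 1, 0;
    0, 1, 0, 0, 0, 0, 0, 1, 0, 0, 0, 1, 0, 1, 0, 0, 0, 0, 0, 1, 1, 0, 1, 1;
    1, 0, 0, 0, 0, 0, 0, 1, 0, 0, 0, 1, 0, 1, 1, 1, 0, 1, 0, 0, 0, 0, 1, 0]

/-- The extended binary Golay code `C₂₄`. -/
def GolayCode : Submodule (ZMod 2) (Fin 24 → ZMod 2) :=
  Submodule.span (ZMod 2) (Set.range fun i => golayMatrix i)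

/-- Membership in the Leech lattice `Λ₂₄ ⊂ ℤ²⁴` (coordinates scaled by `√8`),
via the standard congruence characterization. -/
def IsLeech (x : Fin 24 → ℤ) : Prop :=
  ∃ m : ℤ, (m = 0 ∨ m = 1) ∧ (∀ i, (2:ℤ) ∣ (x i - m)) ∧
    ((fun i => if (4:ℤ) ∣ (x i - m - 2) then (1 : ZMod 2) else 0) ∈ GolayCode) ∧
    (8:ℤ) ∣ ((∑ i, x i) - 4 * m)

/-- The inner product `⟨x, y⟩ = (Σ xᵢ yᵢ)/8` on the Leech lattice. -/
def leechInner (x y : Fin 24 → ℤ) : ℚ := (∑ i, (x i : ℚ) * (y i : ℚ)) / 8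

/-- The lattice point `A = (0²¹, 4, 0, −4)`. -/
def vA : Fin 24 → ℤ := fun i => if i.val = 21 then 4 else if i.val = 23 then -4 else 0

/-- The lattice point `B = (0²¹, 0, 4, −4)`. -/
def vB : Fin 24 → ℤ := fun i => if i.val = 22 then 4 else if i.val = 23 then -4 else 0

/-- `T_AB`: lattice points `T` with `|OT| = |AT| = |BT| = 2`. -/
def TAB : Set (Fin 24 → ℤ) :=
  {T | IsLeech T ∧ leechInner T T = 4 ∧
       leechInner (T - vA) (T - vA) = 4 ∧ leechInner (T - vB) (T - vB) = 4}

/-- Halves of ten minimal vectors of shape `(±2^8, 0^16)` lying in `TAB`. -/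
def halfT : Fin 10 → Fin 24 → ℤ :=
  ![![-1, 1, 1, 1, 0, 0, 0, 0, 0, 0, 0, 0, 0, 0, 0, 0, 0, 0, 0, 0, 1, 1, 1, -1],
    ![0, -1, 0, 0, 1, 0, 0, 0, 0, 0, 0, 1, 0, 0, 1, 0, 0, 1, 0, 0, 0, 1, 1, -1],
    ![-1, 0, 0, 0, 0, 0, 1, 0, 0, 0, 0, 1, 0, 1, 0, 0, 0, 0, 1, 0, 0, 1, 1, -1],
    ![0, 0, 0, 0, -1, 1, 1, 1, 0, 0, 0, 0, 0, 0, 0, 0, 0, 0, 0, 0, 1, 1, 1, -1],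
    ![0, 0, -1, 0, 0, 0, 0, 1, 1, 0, 0, 0, 0, 1, 0, 0, 0, 1, 0, 0, 0, 1, 1, -1],
    ![0, -1, 0, 0, 0, 0, 1, 0, 1, 0, 0, 0, 0, 0, 0, 1, 0, 0, 0, 1, 0, 1, 1, -1],
    ![-1, 0, 0, 0, 0, 0, 0, 1, 0, 1, 0, 0, 0, 0, 1, 0, 0, 0, 0, 1, 0, 1, 1, -1],
    ![0, 0, 0, -1, 1, 0, 0, 0, 0, 0, 1, 0, 0, 1, 0, 0, 0, 0, 0, 1, 0, 1, 1, -1],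
    ![0, 0, 0, 0, 0, 0, 0, 0, 0, 0, 0, 0, -1, 1, 1, 1, 0, 0, 0, 0, 1, 1, 1, -1],
    ![0, 0, 0, 0, 0, 0, 0, 0, 0, 0, 0, 0, 0, 0, 0, 0, -1, 1, 1, 1, 1, 1, 1, -1]]

/-- Golay coefficients of the supports of the rows of `halfT`. -/
def octCoef : Fin 10 → Fin 12 → ZMod 2 :=
  ![![0, 0, 0, 0, 0, 0, 0, 0, 1, 1, 1, 1],
    ![0, 0, 0, 0, 0, 0, 0, 1, 0, 0, 1, 0],
    ![0, 0, 0, 0, 0, 1, 0, 0, 0, 0, 0, 1],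
    ![0, 0, 0, 0, 0, 1, 1, 1, 0, 0, 0, 0],
    ![0, 0, 0, 0, 1, 0, 0, 0, 0, 1, 0, 0],
    ![0, 0, 0, 0, 1, 1, 0, 0, 0, 0, 1, 0],
    ![0, 0, 0, 1, 0, 0, 0, 0, 0, 0, 0, 1],
    ![0, 0, 1, 0, 0, 0, 0, 1, 1, 0, 0, 0],
    ![0, 1, 0, 0, 0, 0, 0, 0, 0, 0, 0, 0],
    ![1, 0, 0, 0, 0, 0, 0, 0, 0, 0, 0, 0]]

/-- `readCoef i j` is the coefficient of the `j`-th octad in the `i`-th Golay generator. -/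
def readCoef : Fin 12 → Fin 10 → ZMod 2 :=
  ![![0, 0, 0, 0, 0, 0, 0, 0, 0, 1],
    ![0, 0, 0, 0, 0, 0, 0, 0, 1, 0],
    ![1, 0, 1, 0, 1, 1, 0, 1, 0, 0],
    ![0, 1, 1, 0, 0, 1, 1, 0, 0, 0],
    ![0, 0, 0, 0, 0, 0, 0, 0, 0, 0],
    ![0, 1, 0, 0, 0, 1, 0, 0, 0, 0],
    ![0, 1, 0, 1, 0, 1, 0, 0, 0, 0],
    ![0, 0, 0, 0, 0, 0, 0, 0, 0, 0],
    ![1, 0, 1, 0, 1, 1, 0, 0, 0, 0],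
    ![0, 0, 0, 0, 1, 0, 0, 0, 0, 0],
    ![0, 1, 0, 0, 0, 0, 0, 0, 0, 0],
    ![0, 1, 1, 0, 0, 1, 0, 0, 0, 0]]

/-- Pivot columns of the Golay generator matrix. -/
def pivotCol : Fin 12 → Fin 24 := ![16, 12, 10, 9, 8, 6, 5, 4, 3, 2, 1, 0]

/-- A complementary codeword ending in `0, 0, 1`. -/
def compE : Fin 24 → ZMod 2 := ![0, 0, 0, 0, 0, 0, 0, 0, 1, 0, 0, 1, 0, 1, 1, 0, 0, 1, 1, 0, 1, 0, 0, 1]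

/-- A complementary codeword ending in `1, 0, 0`. -/
def compF : Fin 24 → ZMod 2 := ![0, 0, 0, 0, 1, 0, 0, 1, 0, 0, 0, 0, 0, 1, 1, 0, 0, 1, 0, 1, 1, 1, 0, 0]

/-- Support octads. -/
def octW (j : Fin 10) (k : Fin 24) : ZMod 2 := ((halfT j k : ℤ) : ZMod 2)

/-- Coefficient functional. -/
def octFun (c : Fin 24 → ZMod 2) (j : Fin 10) : ZMod 2 := ∑ i, readCoef i j * c (pivotCol i)

theorem octW_mem (j : Fin 10) : octW j ∈ GolayCode := by
  refine (Submodule.mem_span_range_iff_exists_fun (ZMod 2)).2 ⟨octCoef j, ?_⟩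
  funext k
  rw [Finset.sum_apply]
  simp only [Pi.smul_apply, smul_eq_mul]
  revert j k
  decide +kernel

theorem one_mem_golay : (fun _ => 1 : Fin 24 → ZMod 2) ∈ GolayCode := by
  refine (Submodule.mem_span_range_iff_exists_fun (ZMod 2)).2 ⟨fun _ => 1, ?_⟩
  funext k
  rw [Finset.sum_apply]
  simp only [Pi.smul_apply, smul_eq_mul]
  revert k
  decide +kernel

theorem golay_decomp (c : Fin 24 → ZMod 2) (hc : c ∈ GolayCode) (k : Fin 24) :
    c k = ∑ j, octFun c j * octW j k + (c 22 - c 23) * compE k + (c 21 - c 22) * compF k := by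
  induction hc using Submodule.span_induction with
  | mem x hx =>
    obtain ⟨i, rfl⟩ := hx
    revert i k
    decide +kernel
  | zero => simp [octFun]
  | add x y _ _ hx hy =>
    have h : ∀ j, octFun (x + y) j = octFun x j + octFun y j := by
      intro j
      simp [octFun, mul_add, Finset.sum_add_distrib]
    simp only [h, Pi.add_apply, add_mul, Finset.sum_add_distrib]
    linear_combination hx + hy
  | smul a x _ hx =>
    have h : ∀ j, octFun (a • x) j = a * octFun x j := by
      intro j
      simp only [octFun, Pi.smul_apply, smul_eq_mul, Finset.mul_sum]
      exact Finset.sum_congr rfl fun i _ => by ring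
    simp only [h, Pi.smul_apply, smul_eq_mul, mul_assoc, ← Finset.mul_sum]
    linear_combination a * hx

/-- A convenient additive form of membership in the Leech lattice. -/
theorem isLeech_iff (x : Fin 24 → ℤ) : IsLeech x ↔
    ∃ (m : ℤ) (u : Fin 24 → ℤ), (∀ i, x i = m + 2 * u i) ∧
      (fun i => ((u i : ℤ) : ZMod 2)) ∈ GolayCode ∧ (8 : ℤ) ∣ (∑ i, x i) - 4 * m := by
  have key : ∀ a : ℤ, (if (2 : ℤ) ∣ a - 1 then (1 : ZMod 2) else 0) = ((a : ℤ) : ZMod 2) := by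
    intro a
    split_ifs with h
    · have : ((a - 1 : ℤ) : ZMod 2) = 0 := (ZMod.intCast_zmod_eq_zero_iff_dvd _ 2).2 h
      push_cast at this
      linear_combination -this
    · exact ((ZMod.intCast_zmod_eq_zero_iff_dvd a 2).2 (by push_cast; omega)).symm
  constructor
  · rintro ⟨m, -, h2, hg, h8⟩
    choose u hu using h2
    refine ⟨m, u, fun i => by linarith [hu i], ?_, h8⟩
    convert hg using 2 with i
    rw [← key]
    have := hu i
    congr 1
    apply propext
    constructor <;> intro h <;> omega
  · rintro ⟨m, u, hu, hg, h8⟩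
    refine ⟨m % 2, by omega, fun i => by rw [hu i]; omega, ?_, by omega⟩
    have h1 : (fun i => ((u i : ℤ) : ZMod 2)) + ((m / 2 : ℤ) : ZMod 2) • (fun _ => 1 : Fin 24 → ZMod 2)
        ∈ GolayCode := GolayCode.add_mem hg (GolayCode.smul_mem _ one_mem_golay)
    convert h1 using 1
    funext i
    have h3 := key (u i + m / 2)
    simp only [Pi.add_apply, Pi.smul_apply, smul_eq_mul, mul_one]
    push_cast at h3
    rw [← h3]
    have := hu i
    congr 1
    apply propext
    constructor <;> intro h <;> omega

theorem IsLeech.sub' {x y : Fin 24 → ℤ} (hx : IsLeech x) (hy : IsLeech y) : IsLeech (x - y) := by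
  rw [isLeech_iff] at *
  obtain ⟨m, u, h1, h2, h3⟩ := hx
  obtain ⟨n, w, k1, k2, k3⟩ := hy
  refine ⟨m - n, u - w, fun i => ?_, ?_, ?_⟩
  · simp only [Pi.sub_apply, h1, k1]; ring
  · convert GolayCode.sub_mem h2 k2 using 1
    funext i; simp
  · simp only [Pi.sub_apply, Finset.sum_sub_distrib]
    omega

theorem isLeech_zero : IsLeech 0 := by
  rw [isLeech_iff]
  refine ⟨0, 0, by simp, ?_, by simp⟩
  convert GolayCode.zero_mem using 1
  funext i; simp

theorem leechInner_eq_iff (x y : Fin 24 → ℤ) (n : ℤ) :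
    leechInner x y = n ↔ ∑ i, x i * y i = 8 * n := by
  unfold leechInner
  rw [div_eq_iff (by norm_num)]
  rw [← Int.cast_inj (α := ℚ)]
  push_cast
  rw [mul_comm (n : ℚ)]

theorem leechInner_vA (v : Fin 24 → ℤ) (n : ℤ) : leechInner v vA = n ↔ v 21 - v 23 = 2 * n := by
  rw [leechInner_eq_iff]
  simp [Fin.sum_univ_succ, vA]
  omega

theorem leechInner_vB (v : Fin 24 → ℤ) (n : ℤ) : leechInner v vB = n ↔ v 22 - v 23 = 2 * n := by
  rw [leechInner_eq_iff]
  simp [Fin.sum_univ_succ, vB]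
  omega

theorem mem_TAB (T : Fin 24 → ℤ) : T ∈ TAB ↔
    IsLeech T ∧ ∑ i, T i * T i = 32 ∧ T 21 - T 23 = 4 ∧ T 22 - T 23 = 4 := by
  have e4 : (4 : ℚ) = ((4 : ℤ) : ℚ) := by norm_num
  have expand : ∀ w : Fin 24 → ℤ, leechInner (T - w) (T - w)
      = leechInner T T - 2 * leechInner T w + leechInner w w := by
    intro w
    simp only [leechInner, Pi.sub_apply]
    rw [← sub_eq_zero]
    field_simp
    push_cast
    simp only [Finset.mul_sum, ← Finset.sum_sub_distrib, ← Finset.sum_add_distrib]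
    rw [mul_zero]
    exact Finset.sum_eq_zero fun i _ => by ring
  have hA : leechInner vA vA = 4 := by
    rw [e4, leechInner_eq_iff]; decide +kernel
  have hB : leechInner vB vB = 4 := by
    rw [e4, leechInner_eq_iff]; decide +kernel
  have h1 := leechInner_vA T 2
  have h2 := leechInner_vB T 2
  have h3 := leechInner_eq_iff T T 4
  norm_num at h1 h2 h3
  rw [← h1, ← h2, ← h3]
  simp only [TAB, Set.mem_setOf_eq, expand, hA, hB]
  constructor
  · rintro ⟨a, b, c, d⟩
    exact ⟨a, b, by linarith, by linarith⟩
  · rintro ⟨a, b, c, d⟩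
    exact ⟨a, b, by linarith, by linarith⟩

/-- The vector `(0^21, 4, 4, 0)` is `2 • halfS`. -/
def halfS : Fin 24 → ℤ := fun i => if i = 21 then 2 else if i = 22 then 2 else 0

/-- The odd vector `(1^23, -3)`. -/
def oddT : Fin 24 → ℤ := fun i => if i = 23 then -3 else 1

/-- The vector `4 s e_i - 4 e_23`. -/
def fourT (s : ℤ) (i : Fin 24) : Fin 24 → ℤ :=
  fun k => if k = i then 4 * s else if k = 23 then -4 else 0

theorem S_mem : (fun k => 2 * halfS k) ∈ TAB := by
  rw [mem_TAB, isLeech_iff]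
  refine ⟨⟨0, halfS, by simp, ?_, by decide +kernel⟩, by decide +kernel⟩
  convert GolayCode.zero_mem using 1
  decide +kernel

theorem T_mem (j : Fin 10) : (fun k => 2 * halfT j k) ∈ TAB := by
  rw [mem_TAB, isLeech_iff]
  exact ⟨⟨0, halfT j, by simp, octW_mem j, by revert j; decide +kernel⟩,
    by revert j; decide +kernel⟩

theorem odd_mem : oddT ∈ TAB := by
  rw [mem_TAB, isLeech_iff]
  refine ⟨⟨1, fun i => if i = 23 then -2 else 0, by decide +kernel, ?_, by decide +kernel⟩,
    by decide +kernel⟩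
  convert GolayCode.zero_mem using 1
  decide +kernel

theorem four_mem (s : ℤ) (hs : s = 1 ∨ s = -1) (i : Fin 24) (hi : i < 21) : fourT s i ∈ TAB := by
  rw [mem_TAB, isLeech_iff]
  refine ⟨⟨0, fun k => if k = i then 2 * s else if k = 23 then -2 else 0, ?_, ?_, ?_⟩, ?_⟩
  · intro k
    simp only [fourT]
    split_ifs <;> ring
  · convert GolayCode.zero_mem using 1
    rcases hs with rfl | rfl <;> revert i <;> decide +kernel
  · rcases hs with rfl | rfl <;> revert i <;> decide +kernel
  · rcases hs with rfl | rfl <;> revert i <;> decide +kernel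

/-- The group generated by differences. -/
def diffGroup : AddSubgroup (Fin 24 → ℤ) :=
  AddSubgroup.closure {d : Fin 24 → ℤ | ∃ T ∈ TAB, ∃ T' ∈ TAB, d = T - T'}

theorem diff_mem {T T' : Fin 24 → ℤ} (h : T ∈ TAB) (h' : T' ∈ TAB) : T - T' ∈ diffGroup :=
  AddSubgroup.subset_closure ⟨T, h, T', h', rfl⟩

/-- Vectors replacing `4 e_i - 4 e_0`. -/
def baseD (i : Fin 24) : Fin 24 → ℤ :=
  if i < 21 then fourT 1 i - fourT 1 0
  else if i = 23 then ((fun k => 2 * halfS k) - fourT (-1) 0)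
    - (2 : ℤ) • (fourT 1 0 - fourT (-1) 0)
  else 0

theorem baseD_mem (i : Fin 24) : baseD i ∈ diffGroup := by
  unfold baseD
  split_ifs with h1 h2
  · exact diff_mem (four_mem 1 (by simp) i h1) (four_mem 1 (by simp) 0 (by decide))
  · exact diffGroup.sub_mem (diff_mem S_mem (four_mem (-1) (by simp) 0 (by decide)))
      (diffGroup.zsmul_mem (diff_mem (four_mem 1 (by simp) 0 (by decide))
        (four_mem (-1) (by simp) 0 (by decide))) 2)
  · exact diffGroup.zero_mem

theorem baseD_eq (i k : Fin 24) : baseD i k =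
    if i < 21 then 4 * ((if k = i then 1 else 0) - (if k = 0 then 1 else 0))
    else if i = 23 then 4 * ((if 21 ≤ k then 1 else 0) - (if k = 0 then 3 else 0)) else 0 := by
  revert i k
  decide +kernel

theorem four_case (y : Fin 24 → ℤ) (h1 : y 21 = y 23) (h2 : y 22 = y 23)
    (hs : (2 : ℤ) ∣ ∑ i, y i) : (fun k => 4 * y k) ∈ diffGroup := by
  obtain ⟨n, hn⟩ := hs
  have : (fun k => 4 * y k) = ∑ i, y i • baseD i + n • (fourT 1 0 - fourT (-1) 0) := by
    funext k
    simp only [Pi.add_apply, Finset.sum_apply, Pi.smul_apply, smul_eq_mul, baseD_eq,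
      Pi.sub_apply, fourT]
    simp only [Fin.sum_univ_succ, Fin.sum_univ_zero] at hn ⊢
    fin_cases k <;> simp at hn h1 h2 ⊢ <;> omega
  rw [this]
  exact diffGroup.add_mem (diffGroup.sum_mem fun i _ => diffGroup.zsmul_mem (baseD_mem i) _)
    (diffGroup.zsmul_mem (diff_mem (four_mem 1 (by simp) 0 (by decide))
        (four_mem (-1) (by simp) 0 (by decide))) n)

theorem half_facts : ∀ j, (4 : ℤ) ∣ ∑ k, (halfS k - halfT j k) ∧
    halfS 21 - halfT j 21 = 1 ∧ halfS 22 - halfT j 22 = 1 ∧ halfS 23 - halfT j 23 = 1 := by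
  decide +kernel

theorem even_case (u : Fin 24 → ℤ) (h1 : u 21 = u 23) (h2 : u 22 = u 23)
    (hg : (fun i => ((u i : ℤ) : ZMod 2)) ∈ GolayCode)
    (hs : (4 : ℤ) ∣ ∑ i, u i) : (fun k => 2 * u k) ∈ diffGroup := by
  set a : Fin 10 → ℤ := fun j => ((octFun (fun i => ((u i : ℤ) : ZMod 2)) j).val : ℤ) with ha
  have hdec := golay_decomp _ hg
  simp only [h1, h2, sub_self, zero_mul, add_zero] at hdec
  have hdiv : ∀ k, (2 : ℤ) ∣ u k - ∑ j, a j * (halfS k - halfT j k) := by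
    intro k
    apply (ZMod.intCast_zmod_eq_zero_iff_dvd _ 2).1
    have hS : ((halfS k : ℤ) : ZMod 2) = 0 := by revert k; decide +kernel
    push_cast
    rw [hdec k, sub_eq_zero]
    refine Finset.sum_congr rfl fun j _ => ?_
    simp only [ha, hS, octW, Int.cast_natCast, ZMod.natCast_val, ZMod.cast_id', id]
    generalize octFun _ j = p
    generalize ((halfT j k : ℤ) : ZMod 2) = q
    revert p q
    decide
  choose y hy using hdiv
  have hA : ∀ k, (21 ≤ k) → ∑ j, a j * (halfS k - halfT j k) = ∑ j, a j := by
    intro k hk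
    refine Finset.sum_congr rfl fun j _ => ?_
    have : halfS k - halfT j k = 1 := by revert j k; decide +kernel
    rw [this, mul_one]
  have hy4 := four_case y
    (by have := hy 21; have := hy 23; rw [hA _ (by decide)] at *; omega)
    (by have := hy 22; have := hy 23; rw [hA _ (by decide)] at *; omega)
    (by
      have e1 : ∑ k, 2 * y k = ∑ k, u k - ∑ k, ∑ j, a j * (halfS k - halfT j k) := by
        rw [← Finset.sum_sub_distrib]
        exact Finset.sum_congr rfl fun k _ => (hy k).symm
      rw [Finset.sum_comm] at e1
      have e2 : (4 : ℤ) ∣ ∑ j, ∑ k, a j * (halfS k - halfT j k) := by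
        refine Finset.dvd_sum fun j _ => ?_
        rw [← Finset.mul_sum]
        exact Dvd.dvd.mul_left (half_facts j).1 _
      rw [← Finset.mul_sum] at e1
      omega)
  have : (fun k => 2 * u k) = (fun k => 4 * y k)
      + ∑ j, a j • ((fun k => 2 * halfS k) - (fun k => 2 * halfT j k)) := by
    funext k
    have e : ∑ j, a j * (2 * halfS k - 2 * halfT j k)
        = 2 * ∑ j, a j * (halfS k - halfT j k) := by
      rw [Finset.mul_sum]
      exact Finset.sum_congr rfl fun j _ => by ring
    simp only [Pi.add_apply, Finset.sum_apply, Pi.smul_apply, smul_eq_mul, Pi.sub_apply, e]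
    linarith [hy k]
  rw [this]
  exact diffGroup.add_mem hy4
    (diffGroup.sum_mem fun j _ => diffGroup.zsmul_mem (diff_mem S_mem (T_mem j)) _)

theorem perp_mem (v : Fin 24 → ℤ) (hv : IsLeech v) (h1 : v 21 = v 23) (h2 : v 22 = v 23) :
    v ∈ diffGroup := by
  rw [isLeech_iff] at hv
  obtain ⟨m, u, hu, hg, h8⟩ := hv
  set o : Fin 24 → ℤ := (fun k => 2 * halfS k) - oddT with ho
  have hoe : ∀ k, o k = if 21 ≤ k then 3 else -1 := by
    simp only [ho]; decide +kernel
  have hsum : ∑ k : Fin 24, (if 21 ≤ k then (-1 : ℤ) else 1) = 18 := by decide +kernel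
  have key := even_case (fun k => u k + m * (if 21 ≤ k then -1 else 1))
    (by have := hu 21; have := hu 23; simp; omega)
    (by have := hu 22; have := hu 23; simp; omega)
    (by
      convert GolayCode.add_mem hg (GolayCode.smul_mem ((m : ℤ) : ZMod 2) one_mem_golay) using 1
      funext k
      have : (((if 21 ≤ k then -1 else 1 : ℤ)) : ZMod 2) = 1 := by revert k; decide +kernel
      simp only [Int.cast_add, Int.cast_mul, this, Pi.add_apply, Pi.smul_apply, smul_eq_mul])
    (by
      rw [Finset.sum_add_distrib, ← Finset.mul_sum, hsum]
      have : ∑ i, v i = 24 * m + 2 * ∑ i, u i := by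
        simp only [hu, Finset.sum_add_distrib, ← Finset.mul_sum]
        simp
      omega)
  have : v = (fun k => 2 * (u k + m * (if 21 ≤ k then -1 else 1))) + m • o := by
    funext k
    simp only [Pi.add_apply, Pi.smul_apply, smul_eq_mul, hoe, hu]
    split_ifs <;> ring
  rw [this]
  exact diffGroup.add_mem key (diffGroup.zsmul_mem (diff_mem S_mem odd_mem) m)

theorem perp_iff (v : Fin 24 → ℤ) : (IsLeech v ∧ leechInner v vA = 0 ∧ leechInner v vB = 0) ↔
    IsLeech v ∧ v 21 = v 23 ∧ v 22 = v 23 := by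
  have h1 := leechInner_vA v 0
  have h2 := leechInner_vB v 0
  simp only [Int.cast_zero, mul_zero, sub_eq_zero] at h1 h2
  rw [h1, h2]

/-- the sublattice of `Λ₂₄` generated by all differences
`T − T′` with `T, T′ ∈ T_AB` equals the orthogonal complement of (the
primitive sublattice containing) `A` and `B` in `Λ₂₄`. -/
theorem diff_closure_eq_perp :
    (AddSubgroup.closure {d : Fin 24 → ℤ | ∃ T ∈ TAB, ∃ T' ∈ TAB, d = T - T'}
        : Set (Fin 24 → ℤ))
      = {v | IsLeech v ∧ leechInner v vA = 0 ∧ leechInner v vB = 0} := by 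
  ext v
  simp only [SetLike.mem_coe, Set.mem_setOf_eq]
  rw [perp_iff]
  constructor
  · intro h
    induction h using AddSubgroup.closure_induction with
    | mem x hx =>
      obtain ⟨T, hT, T', hT', rfl⟩ := hx
      rw [mem_TAB] at hT hT'
      refine ⟨hT.1.sub' hT'.1, ?_, ?_⟩
      · simp only [Pi.sub_apply]; omega
      · simp only [Pi.sub_apply]; omega
    | zero => exact ⟨isLeech_zero, rfl, rfl⟩
    | add x y _ _ hx hy =>
      have hn : IsLeech (0 - y) := isLeech_zero.sub' hy.1
      have := hx.1.sub' hn
      refine ⟨by simpa using this, ?_, ?_⟩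
      · simp only [Pi.add_apply]; omega
      · simp only [Pi.add_apply]; omega
    | neg x _ hx =>
      have hn : IsLeech (0 - x) := isLeech_zero.sub' hx.1
      refine ⟨by simpa using hn, ?_, ?_⟩
      · simp only [Pi.neg_apply]; omega
      · simp only [Pi.neg_apply]; omega
  · rintro ⟨h, h1, h2⟩
    exact perp_mem v h h1 h2
end

section
/- With A = (0^{21},4,0,−4) and B = (0^{21},0,4,−4), the orthogonal complement R_{AB}^⊥ in the Leech lattice equals the set of Leech lattice vectors x with x₂₂ = x₂₃ = x₂₄, and this lattice is isomorphic to the laminated lattice Λ₂₂ of rank 22. -/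
open scoped BigOperators

/-- The orthogonal complement `R_AB^⊥` of `R_AB` in the Leech lattice. -/
def RperpSet : Set (Fin 24 → ℤ) :=
  {v | IsLeech v ∧ leechInner v vA = 0 ∧ leechInner v vB = 0}

/-- The laminated lattice `Λ₂₂`, realized (following Conway–Sloane, Fig. 6.2)
as the section of `Λ₂₄` by the hyperplanes `x₂₂ = x₂₃ = x₂₄`. -/
def Lam22Set : Set (Fin 24 → ℤ) :=
  {v | IsLeech v ∧ v ⟨21, by omega⟩ = v ⟨22, by omega⟩ ∧
       v ⟨22, by omega⟩ = v ⟨23, by omega⟩}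

/-- The basis (row Hermite form). -/
def bas : Matrix (Fin 22) (Fin 24) ℤ :=
  !![1, 1, 1, 1, 1, 1, 1, 1, 1, 1, 1, 1, 1, 1, 1, 1, 1, 1, 1, 1, 1, 5, 5, 5;
    0, 2, 0, 0, 0, 0, 0, 2, 0, 0, 2, 0, 0, 2, 2, 2, 0, 0, 2, 0, 2, 0, 0, 0;
    0, 0, 2, 0, 0, 0, 0, 2, 0, 2, 2, 2, 0, 2, 0, 0, 0, 2, 0, 0, 2, 0, 0, 0;
    0, 0, 0, 2, 0, 0, 0, 2, 0, 0, 0, 2, 0, 0, 0, 2, 0, 2, 2, 2, 2, 0, 0, 0;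
    0, 0, 0, 0, 2, 0, 0, 2, 0, 0, 2, 2, 0, 2, 0, 2, 0, 2, 2, 0, 2, 2, 2, 2;
    0, 0, 0, 0, 0, 2, 0, 2, 0, 2, 2, 0, 0, 0, 2, 2, 0, 2, 0, 2, 0, 0, 0, 0;
    0, 0, 0, 0, 0, 0, 2, 2, 0, 2, 0, 2, 0, 2, 2, 0, 0, 0, 2, 2, 0, 0, 0, 0;
    0, 0, 0, 0, 0, 0, 0, 4, 0, 0, 0, 0, 0, 0, 0, 0, 0, 0, 0, 0, 0, 4, 4, 4;
    0, 0, 0, 0, 0, 0, 0, 0, 2, 2, 2, 2, 0, 0, 0, 0, 0, 0, 0, 0, 2, 2, 2, 2;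
    0, 0, 0, 0, 0, 0, 0, 0, 0, 4, 0, 0, 0, 0, 0, 0, 0, 0, 0, 0, 0, 4, 4, 4;
    0, 0, 0, 0, 0, 0, 0, 0, 0, 0, 4, 0, 0, 0, 0, 0, 0, 0, 0, 0, 0, 4, 4, 4;
    0, 0, 0, 0, 0, 0, 0, 0, 0, 0, 0, 4, 0, 0, 0, 0, 0, 0, 0, 0, 0, 4, 4, 4;
    0, 0, 0, 0, 0, 0, 0, 0, 0, 0, 0, 0, 2, 2, 2, 2, 0, 0, 0, 0, 2, 2, 2, 2;
    0, 0, 0, 0, 0, 0, 0, 0, 0, 0, 0, 0, 0, 4, 0, 0, 0, 0, 0, 0, 0, 4, 4, 4;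
    0, 0, 0, 0, 0, 0, 0, 0, 0, 0, 0, 0, 0, 0, 4, 0, 0, 0, 0, 0, 0, 4, 4, 4;
    0, 0, 0, 0, 0, 0, 0, 0, 0, 0, 0, 0, 0, 0, 0, 4, 0, 0, 0, 0, 0, 4, 4, 4;
    0, 0, 0, 0, 0, 0, 0, 0, 0, 0, 0, 0, 0, 0, 0, 0, 2, 2, 2, 2, 2, 2, 2, 2;
    0, 0, 0, 0, 0, 0, 0, 0, 0, 0, 0, 0, 0, 0, 0, 0, 0, 4, 0, 0, 0, 4, 4, 4;
    0, 0, 0, 0, 0, 0, 0, 0, 0, 0, 0, 0, 0, 0, 0, 0, 0, 0, 4, 0, 0, 4, 4, 4;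
    0, 0, 0, 0, 0, 0, 0, 0, 0, 0, 0, 0, 0, 0, 0, 0, 0, 0, 0, 4, 0, 4, 4, 4;
    0, 0, 0, 0, 0, 0, 0, 0, 0, 0, 0, 0, 0, 0, 0, 0, 0, 0, 0, 0, 4, 4, 4, 4;
    0, 0, 0, 0, 0, 0, 0, 0, 0, 0, 0, 0, 0, 0, 0, 0, 0, 0, 0, 0, 0, 8, 8, 8]

/-- Eight times the dual basis (functions of the first 22 coordinates). -/
def dualM : Matrix (Fin 24) (Fin 22) ℤ :=
  !![8, -4, -4, -4, -4, -4, -4, 10, -4, 6, 8, 8, -4, 8, 6, 8, -4, 8, 8, 6, 12, -45;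
    0, 4, 0, 0, 0, 0, 0, -2, 0, 0, -2, 0, 0, -2, -2, -2, 0, 0, -2, 0, -2, 7;
    0, 0, 4, 0, 0, 0, 0, -2, 0, -2, -2, -2, 0, -2, 0, 0, 0, -2, 0, 0, -2, 7;
    0, 0, 0, 4, 0, 0, 0, -2, 0, 0, 0, -2, 0, 0, 0, -2, 0, -2, -2, -2, -2, 7;
    0, 0, 0, 0, 4, 0, 0, -2, 0, 0, -2, -2, 0, -2, 0, -2, 0, -2, -2, 0, -2, 7;
    0, 0, 0, 0, 0, 4, 0, -2, 0, -2, -2, 0, 0, 0, -2, -2, 0, -2, 0, -2, 0, 7;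
    0, 0, 0, 0, 0, 0, 4, -2, 0, -2, 0, -2, 0, -2, -2, 0, 0, 0, -2, -2, 0, 7;
    0, 0, 0, 0, 0, 0, 0, 2, 0, 0, 0, 0, 0, 0, 0, 0, 0, 0, 0, 0, 0, -1;
    0, 0, 0, 0, 0, 0, 0, 0, 4, -2, -2, -2, 0, 0, 0, 0, 0, 0, 0, 0, -2, 3;
    0, 0, 0, 0, 0, 0, 0, 0, 0, 2, 0, 0, 0, 0, 0, 0, 0, 0, 0, 0, 0, -1;
    0, 0, 0, 0, 0, 0, 0, 0, 0, 0, 2, 0, 0, 0, 0, 0, 0, 0, 0, 0, 0, -1;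
    0, 0, 0, 0, 0, 0, 0, 0, 0, 0, 0, 2, 0, 0, 0, 0, 0, 0, 0, 0, 0, -1;
    0, 0, 0, 0, 0, 0, 0, 0, 0, 0, 0, 0, 4, -2, -2, -2, 0, 0, 0, 0, -2, 3;
    0, 0, 0, 0, 0, 0, 0, 0, 0, 0, 0, 0, 0, 2, 0, 0, 0, 0, 0, 0, 0, -1;
    0, 0, 0, 0, 0, 0, 0, 0, 0, 0, 0, 0, 0, 0, 2, 0, 0, 0, 0, 0, 0, -1;
    0, 0, 0, 0, 0, 0, 0, 0, 0, 0, 0, 0, 0, 0, 0, 2, 0, 0, 0, 0, 0, -1;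
    0, 0, 0, 0, 0, 0, 0, 0, 0, 0, 0, 0, 0, 0, 0, 0, 4, -2, -2, -2, -2, 3;
    0, 0, 0, 0, 0, 0, 0, 0, 0, 0, 0, 0, 0, 0, 0, 0, 0, 2, 0, 0, 0, -1;
    0, 0, 0, 0, 0, 0, 0, 0, 0, 0, 0, 0, 0, 0, 0, 0, 0, 0, 2, 0, 0, -1;
    0, 0, 0, 0, 0, 0, 0, 0, 0, 0, 0, 0, 0, 0, 0, 0, 0, 0, 0, 2, 0, -1;
    0, 0, 0, 0, 0, 0, 0, 0, 0, 0, 0, 0, 0, 0, 0, 0, 0, 0, 0, 0, 2, -1;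
    0, 0, 0, 0, 0, 0, 0, 0, 0, 0, 0, 0, 0, 0, 0, 0, 0, 0, 0, 0, 0, 1;
    0, 0, 0, 0, 0, 0, 0, 0, 0, 0, 0, 0, 0, 0, 0, 0, 0, 0, 0, 0, 0, 0;
    0, 0, 0, 0, 0, 0, 0, 0, 0, 0, 0, 0, 0, 0, 0, 0, 0, 0, 0, 0, 0, 0]

/-- Golay coefficients of the basis vectors. -/
def basCode : Matrix (Fin 22) (Fin 12) (ZMod 2) :=
  !![0, 0, 0, 0, 0, 0, 0, 0, 0, 0, 0, 0;
    0, 0, 1, 0, 0, 0, 0, 0, 0, 0, 1, 0;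
    0, 0, 1, 1, 0, 0, 0, 0, 0, 1, 0, 0;
    0, 0, 0, 0, 0, 0, 0, 0, 1, 0, 0, 0;
    0, 0, 1, 0, 0, 0, 0, 1, 0, 0, 0, 0;
    0, 0, 1, 1, 0, 0, 1, 0, 0, 0, 0, 0;
    0, 0, 0, 1, 0, 1, 0, 0, 0, 0, 0, 0;
    0, 0, 0, 0, 0, 0, 0, 0, 0, 0, 0, 0;
    0, 0, 1, 1, 1, 0, 0, 0, 0, 0, 0, 0;
    0, 0, 0, 0, 0, 0, 0, 0, 0, 0, 0, 0;
    0, 0, 0, 0, 0, 0, 0, 0, 0, 0, 0, 0;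
    0, 0, 0, 0, 0, 0, 0, 0, 0, 0, 0, 0;
    0, 1, 0, 0, 0, 0, 0, 0, 0, 0, 0, 0;
    0, 0, 0, 0, 0, 0, 0, 0, 0, 0, 0, 0;
    0, 0, 0, 0, 0, 0, 0, 0, 0, 0, 0, 0;
    0, 0, 0, 0, 0, 0, 0, 0, 0, 0, 0, 0;
    1, 0, 0, 0, 0, 0, 0, 0, 0, 0, 0, 0;
    0, 0, 0, 0, 0, 0, 0, 0, 0, 0, 0, 0;
    0, 0, 0, 0, 0, 0, 0, 0, 0, 0, 0, 0;
    0, 0, 0, 0, 0, 0, 0, 0, 0, 0, 0, 0;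
    0, 0, 0, 0, 0, 0, 0, 0, 0, 0, 0, 0;
    0, 0, 0, 0, 0, 0, 0, 0, 0, 0, 0, 0]

/-- Parities of the basis vectors. -/
def basPar : Fin 22 → ℤ := ![1, 0, 0, 0, 0, 0, 0, 0, 0, 0, 0, 0, 0, 0, 0, 0, 0, 0, 0, 0, 0, 0]

theorem bas_code (i : Fin 22) : IsLeech (bas i) := by
  refine ⟨basPar i, ?_, ?_, ?_, ?_⟩
  · revert i; decide +kernel
  · revert i; decide +kernel
  · have h : (fun j => if (4:ℤ) ∣ (bas i j - basPar i - 2) then (1 : ZMod 2) else 0)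
        = ∑ k, basCode i k • golayMatrix k := by
      revert i; decide +kernel
    rw [h]
    exact Submodule.sum_mem _ fun k _ => Submodule.smul_mem _ _
      (Submodule.subset_span ⟨k, rfl⟩)
  · revert i; decide +kernel

theorem inner_vA (v : Fin 24 → ℤ) : leechInner v vA = 0 ↔ v 21 = v 23 := by
  have h : leechInner v vA = ((v 21 : ℚ) - v 23) / 2 := by
    simp [leechInner, vA, Fin.sum_univ_succ]
    ring
  rw [h, div_eq_zero_iff, sub_eq_zero]
  norm_num

theorem inner_vB (v : Fin 24 → ℤ) : leechInner v vB = 0 ↔ v 22 = v 23 := by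
  have h : leechInner v vB = ((v 22 : ℚ) - v 23) / 2 := by
    simp [leechInner, vB, Fin.sum_univ_succ]
    ring
  rw [h, div_eq_zero_iff, sub_eq_zero]
  norm_num

theorem mem_Rperp (v : Fin 24 → ℤ) :
    v ∈ RperpSet ↔ IsLeech v ∧ v 21 = v 23 ∧ v 22 = v 23 := by
  rw [← inner_vA, ← inner_vB]; rfl

/-- Integral parametrization of Leech vectors. -/
theorem leech_param (v : Fin 24 → ℤ) (h : IsLeech v) :
    ∃ (m k : ℤ) (a : Fin 12 → ℤ) (w : Fin 24 → ℤ),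
      (∀ j, v j = m + 2 * ∑ i, a i * ((golayMatrix i j).val : ℤ) + 4 * w j) ∧
      ∑ i, v i = 4 * m + 8 * k := by
  obtain ⟨m, -, h2, hc, k, hk⟩ := h
  rw [GolayCode, Submodule.mem_span_range_iff_exists_fun] at hc
  obtain ⟨a, ha⟩ := hc
  have key : ∀ j, ∃ t : ℤ, v j = m + 2 * ∑ i, ((a i).val : ℤ) * ((golayMatrix i j).val : ℤ)
      + 4 * t := by
    intro j
    have hj := congrFun ha j
    have e : ((∑ i, ((a i).val : ℤ) * ((golayMatrix i j).val : ℤ) : ℤ) : ZMod 2)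
        = ∑ i, a i * golayMatrix i j := by
      push_cast
      simp
    simp only [Finset.sum_apply, Pi.smul_apply, smul_eq_mul] at hj
    rw [← e] at hj
    generalize (∑ i, ((a i).val : ℤ) * ((golayMatrix i j).val : ℤ) : ℤ) = s at hj
    obtain ⟨q, hq⟩ := h2 j
    split_ifs at hj with h4
    · have : ((s - 1 : ℤ) : ZMod 2) = 0 := by push_cast; rw [hj]; ring
      rw [ZMod.intCast_zmod_eq_zero_iff_dvd] at this
      exact ⟨(v j - m - 2 * s) / 4, by push_cast at this; omega⟩
    · rw [ZMod.intCast_zmod_eq_zero_iff_dvd] at hj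
      exact ⟨(v j - m - 2 * s) / 4, by push_cast at hj; omega⟩
  choose w hw using key
  exact ⟨m, k, fun i => (a i).val, w, hw, by linarith⟩

set_option maxHeartbeats 4000000 in
theorem dual_dvd (v : Fin 24 → ℤ) (h : IsLeech v) (h1 : v 21 = v 23) (h2 : v 22 = v 23)
    (k : Fin 22) : (8 : ℤ) ∣ ∑ j, v j * dualM j k := by
  obtain ⟨m, l, a, w, hw, hs⟩ := leech_param v h
  have H := fun j => hw j
  simp only [Fin.forall_fin_succ, Fin.sum_univ_succ, golayMatrix] at H
  simp [ZMod.val_one] at H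
  simp [Fin.sum_univ_succ] at hs
  obtain ⟨e0, e1, e2, e3, e4, e5, e6, e7, e8, e9, e10, e11, e12, e13, e14, e15, e16, e17,
    e18, e19, e20, e21, e22, e23⟩ := H
  clear hw h
  have a7 : a 7 = 2 * (w 23 - w 21) + a 2 + a 4 + a 10 - a 6 - a 9 := by linarith
  have a11 : a 11 = 2 * (w 23 - w 22) + a 3 + a 4 + a 5 - a 6 - a 9 := by linarith
  have w0 : w 0 = 2 * l - 5 * m - 4 * (a 0 + a 1 + a 2 + a 3 + a 4 + a 5 + a 6 + a 7 + a 8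
      + a 9 + a 10 + a 11) - (w 1 + w 2 + w 3 + w 4 + w 5 + w 6 + w 7 + w 8 + w 9 + w 10
      + w 11 + w 12 + w 13 + w 14 + w 15 + w 16 + w 17 + w 18 + w 19 + w 20 + w 21 + w 22
      + w 23) := by linarith
  clear hs h1 h2
  revert k
  simp only [Fin.forall_fin_succ, Fin.sum_univ_succ, dualM]
  simp
  refine ⟨?_, ?_, ?_, ?_, ?_, ?_, ?_, ?_, ?_, ?_, ?_, ?_, ?_, ?_, ?_, ?_, ?_, ?_, ?_, ?_, ?_⟩
  all_goals
    simp only [e0, e1, e2, e3, e4, e5, e6, e7, e8, e9, e10, e11, e12, e13, e14, e15, e16,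
      e17, e18, e19, e20, e21, w0, a7, a11]
    clear e0 e1 e2 e3 e4 e5 e6 e7 e8 e9 e10 e11 e12 e13 e14 e15 e16 e17 e18 e19 e20 e21 e22 e23
    clear w0 a7 a11
    omega

theorem bas_dual (i k : Fin 22) : ∑ j, bas i j * dualM j k = if i = k then 8 else 0 := by
  revert i k; decide +kernel

theorem dual_bas (j j' : Fin 24) (h : j'.val < 22) :
    ∑ k, dualM j k * bas k j' = if j = j' then 8 else 0 := by
  revert j j'; decide +kernel

theorem bas_last (k : Fin 22) : bas k 21 = bas k 23 ∧ bas k 22 = bas k 23 := by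
  revert k; decide +kernel

theorem bas_mem (k : Fin 22) : bas k ∈ RperpSet :=
  (mem_Rperp _).2 ⟨bas_code k, bas_last k⟩

theorem bas_span (v : Fin 24 → ℤ) (hv : v ∈ RperpSet) :
    v ∈ AddSubgroup.closure (Set.range fun i => bas i) := by
  obtain ⟨h, h1, h2⟩ := (mem_Rperp v).1 hv
  choose c hc using dual_dvd v h h1 h2
  have main : ∀ j' : Fin 24, j'.val < 22 → v j' = ∑ k, c k * bas k j' := by
    intro j' hj
    have : 8 * v j' = 8 * ∑ k, c k * bas k j' := by
      calc 8 * v j' = ∑ j, v j * (∑ k, dualM j k * bas k j') := by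
            simp only [dual_bas _ j' hj]
            simp [mul_comm]
        _ = ∑ k, (∑ j, v j * dualM j k) * bas k j' := by
            simp only [Finset.mul_sum, Finset.sum_mul]
            rw [Finset.sum_comm]
            simp only [mul_assoc]
        _ = 8 * ∑ k, c k * bas k j' := by
            simp only [hc, Finset.mul_sum, mul_assoc]
    omega
  have h21 := main 21 (by decide)
  have h23 : v 23 = ∑ k, c k * bas k 23 := by
    rw [← h1, h21]
    exact Finset.sum_congr rfl fun k _ => by rw [(bas_last k).1]
  have h22 : v 22 = ∑ k, c k * bas k 22 := by
    rw [h2, h23]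
    exact Finset.sum_congr rfl fun k _ => by rw [(bas_last k).2]
  have hall : v = ∑ k, c k • bas k := by
    funext j
    simp only [Finset.sum_apply, Pi.smul_apply, smul_eq_mul]
    by_cases hj : j.val < 22
    · exact main j hj
    · have : j = 22 ∨ j = 23 := by
        have := j.isLt
        simp only [Fin.ext_iff]
        change j.val = 22 ∨ j.val = 23
        omega
      rcases this with rfl | rfl
      · exact h22
      · exact h23
  rw [hall]
  exact AddSubgroup.sum_mem _ fun k _ => AddSubgroup.zsmul_mem _
    (AddSubgroup.subset_closure (Set.mem_range_self k)) _

theorem bas_indep : LinearIndependent ℚ (fun (i : Fin 22) (j : Fin 24) => ((bas i j : ℚ))) := by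
  rw [Fintype.linearIndependent_iff]
  intro g hg k
  have h0 : ∑ j, (∑ i, g i * (bas i j : ℚ)) * (dualM j k : ℚ) = 0 := by
    refine Finset.sum_eq_zero fun j _ => ?_
    have := congrFun hg j
    simp only [Finset.sum_apply, Pi.smul_apply, smul_eq_mul, Pi.zero_apply] at this
    rw [this, zero_mul]
  have h1 : ∑ j, (∑ i, g i * (bas i j : ℚ)) * (dualM j k : ℚ)
      = ∑ i, g i * ((∑ j, bas i j * dualM j k : ℤ) : ℚ) := by
    push_cast
    simp only [Finset.mul_sum, Finset.sum_mul]
    rw [Finset.sum_comm]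
    simp only [mul_assoc]
  rw [h1] at h0
  simpa [bas_dual] using h0

/-- `R_AB^⊥` equals the set of Leech vectors with
`x₂₂ = x₂₃ = x₂₄` (the laminated lattice `Λ₂₂`), a lattice of rank 22. -/
theorem Rperp_eq_Lam22 :
    RperpSet = Lam22Set ∧
    ∃ b : Fin 22 → (Fin 24 → ℤ),
      (∀ i, b i ∈ RperpSet) ∧
      LinearIndependent ℚ (fun i j => ((b i j : ℚ))) ∧
      ∀ v ∈ RperpSet, v ∈ AddSubgroup.closure (Set.range b) := by 
  refine ⟨?_, fun i => bas i, bas_mem, bas_indep, bas_span⟩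
  ext v
  rw [mem_Rperp]
  change _ ↔ IsLeech v ∧ v 21 = v 22 ∧ v 22 = v 23
  constructor
  · rintro ⟨h, h1, h2⟩
    exact ⟨h, h1.trans h2.symm, h2⟩
  · rintro ⟨h, h1, h2⟩
    exact ⟨h, h1.trans h2, h2⟩
end
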